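/- arXiv:2603.13178 — 5 statements merged into one kernel-verified Lean document; each statement's English description precedes it below -/
import Mathlib

section
/- If G is a finite regular simple graph (all vertices have the same degree), then G admits a locally irregular total coloring with 2 colors, i.e., tlir(G) ≤ 2. -/
open Finset
open scoped Classical

variable {V : Type*}

/-- The total degree of a vertex `v` in color `i`, given a vertex coloring `cV` and an
edge coloring `cE` of a graph `G` with `k` colors: the number of edges of color `i`
incident to `v`, plus `1` if `v` itself has color `i`. -/
noncomputable def totalDeg [Fintype V] (G : SimpleGraph V) {k : ℕ}
    (cV : V → Fin k) (cE : Sym2 V → Fin k) (i : Fin k) (v : V) : ℕ :=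
  (univ.filter fun u => G.Adj v u ∧ cE s(v, u) = i).card + (if cV v = i then 1 else 0)

/-- `(cV, cE)` is a locally irregular total coloring of `G`: for every edge `uv`,
the total degrees of `u` and `v` in the color of `uv` are distinct. -/
def IsTLIR [Fintype V] (G : SimpleGraph V) {k : ℕ}
    (cV : V → Fin k) (cE : Sym2 V → Fin k) : Prop :=
  ∀ u v, G.Adj u v →
    totalDeg G cV cE (cE s(u, v)) u ≠ totalDeg G cV cE (cE s(u, v)) v

/-- `G` admits a locally irregular total coloring with `k` colors, i.e. `tlir(G) ≤ k`. -/
def HasTLIR [Fintype V] (G : SimpleGraph V) (k : ℕ) : Prop :=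
  ∃ (cV : V → Fin k) (cE : Sym2 V → Fin k), IsTLIR G cV cE

/-- The number of edges of `G` at `v` that belong to the edge set `F`. -/
noncomputable def edgeSetDegree {V : Type*} [Fintype V] (G : SimpleGraph V) (F : Sym2 V → Prop)
    (v : V) : ℕ :=
  (univ.filter fun u => G.Adj v u ∧ F s(v, u)).card

/-- The edge set `F` with the membership of the edge `e` switched. -/
def toggleEdge {V : Type*} (F : Sym2 V → Prop) (e : Sym2 V) : Sym2 V → Prop :=
  fun e' => (F e' ↔ e' ≠ e)

lemma toggleEdge_of_ne {V : Type*} {F : Sym2 V → Prop} {e e' : Sym2 V} (h : e' ≠ e) :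
    toggleEdge F e e' ↔ F e' := by
  simp [toggleEdge, h]

section Toggle

variable {V : Type*} [Fintype V] {G : SimpleGraph V} {F : Sym2 V → Prop} {u v w : V}

lemma edgeSetDegree_toggleEdge_of_ne (hv : w ≠ v) (hu : w ≠ u) :
    edgeSetDegree G (toggleEdge F s(v, u)) w = edgeSetDegree G F w := by
  unfold edgeSetDegree
  congr 1
  ext x
  have : s(w, x) ≠ s(v, u) := by
    simp only [ne_eq, Sym2.eq_iff]; tauto
  simp [toggleEdge_of_ne this]

lemma edgeSetDegree_toggleEdge_of_mem (h : G.Adj v u) (hF : F s(v, u)) :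
    edgeSetDegree G (toggleEdge F s(v, u)) v + 1 = edgeSetDegree G F v := by
  unfold edgeSetDegree
  have : (univ.filter fun x => G.Adj v x ∧ toggleEdge F s(v, u) s(v, x)) =
      (univ.filter fun x => G.Adj v x ∧ F s(v, x)).erase u := by
    ext x
    by_cases hx : x = u
    · subst hx; simp [toggleEdge, hF]
    · have : s(v, x) ≠ s(v, u) := fun h => hx (Sym2.congr_right.1 h)
      simp [toggleEdge_of_ne this, hx]
  rw [this, card_erase_add_one]
  simp [h, hF]

lemma edgeSetDegree_toggleEdge_of_notMem (h : G.Adj v u) (hF : ¬ F s(v, u)) :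
    edgeSetDegree G (toggleEdge F s(v, u)) v = edgeSetDegree G F v + 1 := by
  unfold edgeSetDegree
  have : (univ.filter fun x => G.Adj v x ∧ toggleEdge F s(v, u) s(v, x)) =
      insert u (univ.filter fun x => G.Adj v x ∧ F s(v, x)) := by
    ext x
    by_cases hx : x = u
    · subst hx; simp [toggleEdge, hF, h]
    · have : s(v, x) ≠ s(v, u) := fun h => hx (Sym2.congr_right.1 h)
      simp [toggleEdge_of_ne this, hx]
  rw [this, card_insert_of_notMem]
  simp [hF]

end Toggle

section Factor

variable {V : Type*} [Fintype V] (G : SimpleGraph V)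

/-- The total distance of the `F`-degrees from the intervals `[s v - 1, s v]`. -/
noncomputable def degreeDefect (s : V → ℤ) (F : Sym2 V → Prop) : ℤ :=
  ∑ v, max 0 (max (edgeSetDegree G F v - s v) (s v - 1 - edgeSetDegree G F v))

/-- There is an alternating walk with `n + 1` edges starting at `v`: it leaves the vertices with
`F`-degree at least `s` along edges in `F` and the other ones along edges outside `F`, and only its
last two vertices are of the same kind. -/
def HasAugmentingWalk (s : V → ℤ) (F : Sym2 V → Prop) : ℕ → V → Prop
  | 0, v => ∃ b, G.Adj v b ∧ (F s(v, b) ↔ s v ≤ edgeSetDegree G F v) ∧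
      (s b ≤ edgeSetDegree G F b ↔ s v ≤ edgeSetDegree G F v)
  | n + 1, v => ∃ b, G.Adj v b ∧ (F s(v, b) ↔ s v ≤ edgeSetDegree G F v) ∧
      ¬ (s b ≤ edgeSetDegree G F b ↔ s v ≤ edgeSetDegree G F v) ∧ HasAugmentingWalk s F n b

variable {G} {s : V → ℤ} {F : Sym2 V → Prop} {u v : V}

/-- Switching an edge only changes the degrees of its ends. -/
lemma degreeDefect_toggleEdge (h : G.Adj v u) :
    degreeDefect G s (toggleEdge F s(v, u)) - degreeDefect G s F =
      (max 0 (max (edgeSetDegree G (toggleEdge F s(v, u)) v - s v)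
          (s v - 1 - edgeSetDegree G (toggleEdge F s(v, u)) v)) -
        max 0 (max (edgeSetDegree G F v - s v) (s v - 1 - edgeSetDegree G F v))) +
      (max 0 (max (edgeSetDegree G (toggleEdge F s(v, u)) u - s u)
          (s u - 1 - edgeSetDegree G (toggleEdge F s(v, u)) u)) -
        max 0 (max (edgeSetDegree G F u - s u) (s u - 1 - edgeSetDegree G F u))) := by
  unfold degreeDefect
  rw [← sum_sub_distrib, ← sum_subset (subset_univ {v, u}), sum_pair h.ne]
  intro x _ hx
  simp only [mem_insert, mem_singleton, not_or] at hx
  rw [edgeSetDegree_toggleEdge_of_ne hx.1 hx.2, sub_self]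

lemma edgeSetDegree_toggleEdge_eq_or (h : G.Adj v u) :
    F s(v, u) ∧ edgeSetDegree G (toggleEdge F s(v, u)) v + 1 = edgeSetDegree G F v ∧
        edgeSetDegree G (toggleEdge F s(v, u)) u + 1 = edgeSetDegree G F u ∨
      ¬ F s(v, u) ∧ edgeSetDegree G (toggleEdge F s(v, u)) v = edgeSetDegree G F v + 1 ∧
        edgeSetDegree G (toggleEdge F s(v, u)) u = edgeSetDegree G F u + 1 := by
  by_cases hF : F s(v, u)
  · refine .inl ⟨hF, edgeSetDegree_toggleEdge_of_mem h hF, ?_⟩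
    rw [Sym2.eq_swap] at hF ⊢
    exact edgeSetDegree_toggleEdge_of_mem h.symm hF
  · refine .inr ⟨hF, edgeSetDegree_toggleEdge_of_notMem h hF, ?_⟩
    rw [Sym2.eq_swap] at hF ⊢
    exact edgeSetDegree_toggleEdge_of_notMem h.symm hF

/-- A walk from `a` survives switching an edge `vu` if there is no walk from `v` of at most
the same length. -/
lemma HasAugmentingWalk.toggle
    (hhigh : ∀ w, s w ≤ edgeSetDegree G (toggleEdge F s(v, u)) w ↔ s w ≤ edgeSetDegree G F w)
    (hF : F s(v, u) ↔ s v ≤ edgeSetDegree G F v)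
    (hvu : ¬ (s u ≤ edgeSetDegree G F u ↔ s v ≤ edgeSetDegree G F v))
    (n : ℕ) (hn : ∀ m ≤ n, ¬ HasAugmentingWalk G s F m v) (a : V)
    (ha : HasAugmentingWalk G s F n a) :
    HasAugmentingWalk G s (toggleEdge F s(v, u)) n a := by
  have key : ∀ a b, a ≠ v → (F s(a, b) ↔ s a ≤ edgeSetDegree G F a) →
      (toggleEdge F s(v, u) s(a, b) ↔ s a ≤ edgeSetDegree G F a) := by
    intro a b hav hab
    have : s(a, b) ≠ s(v, u) := by
      intro h
      rw [h] at hab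
      rcases Sym2.eq_iff.1 h with ⟨h1, h2⟩ | ⟨h1, h2⟩
      · exact hav h1
      · subst h1; tauto
    simpa [toggleEdge, this] using hab
  induction n generalizing a with
  | zero =>
    have hav : a ≠ v := fun h => hn 0 le_rfl (h ▸ ha)
    obtain ⟨b, h1, h2, h3⟩ := ha
    refine ⟨b, h1, ?_, ?_⟩
    · rw [hhigh]; exact key a b hav h2
    · rwa [hhigh, hhigh]
  | succ n ih =>
    have hav : a ≠ v := fun h => hn _ le_rfl (h ▸ ha)
    obtain ⟨b, h1, h2, h3, h4⟩ := ha
    refine ⟨b, h1, ?_, ?_, ih (fun m hm => hn m (by omega)) b h4⟩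
    · rw [hhigh]; exact key a b hav h2
    · rwa [hhigh, hhigh]

/-- Switching the edges of an augmenting walk from a vertex whose degree is out of range lowers
the defect. -/
lemma HasAugmentingWalk.exists_degreeDefect_lt (n : ℕ) :
    ∀ (F : Sym2 V → Prop) (v : V), HasAugmentingWalk G s F n v →
      (s v < edgeSetDegree G F v ∨ (edgeSetDegree G F v : ℤ) < s v - 1) →
      ∃ F', degreeDefect G s F' < degreeDefect G s F := by
  induction n using Nat.strong_induction_on with
  | _ n ih =>
    intro F v hw hv
    by_cases hshort : ∃ m < n, HasAugmentingWalk G s F m v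
    · obtain ⟨m, hm, h⟩ := hshort
      exact ih m hm F v h hv
    push Not at hshort
    cases n with
    | zero =>
      obtain ⟨u, hadj, hF, htype⟩ := hw
      refine ⟨toggleEdge F s(v, u), ?_⟩
      have h := degreeDefect_toggleEdge (s := s) (F := F) hadj
      rcases edgeSetDegree_toggleEdge_eq_or (F := F) hadj with ⟨h1, h2, h3⟩ | ⟨h1, h2, h3⟩ <;>
        grind
    | succ n =>
      obtain ⟨u, hadj, hF, htype, hwalk⟩ := hw
      have h := degreeDefect_toggleEdge (s := s) (F := F) hadj
      have hdeg := edgeSetDegree_toggleEdge_eq_or (F := F) hadj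
      have hhigh : ∀ w, s w ≤ edgeSetDegree G (toggleEdge F s(v, u)) w ↔
          s w ≤ edgeSetDegree G F w := by
        intro w
        by_cases hwv : w = v
        · subst hwv
          grind
        by_cases hwu : w = u
        · subst hwu
          grind
        rw [edgeSetDegree_toggleEdge_of_ne hwv hwu]
      obtain ⟨F', hF'⟩ := ih n (Nat.lt_succ_self n) (toggleEdge F s(v, u)) u
        (hwalk.toggle hhigh hF htype n (fun m hm => hshort m (by omega)) u) (by grind)
      refine ⟨F', hF'.trans_le ?_⟩
      grind

end Factor

section PairSum

/-- The indicator of a proposition as an integer. -/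
noncomputable def propInd (P : Prop) : ℤ := if P then 1 else 0

variable {V : Type*} [Fintype V]

/-- The sum of `f` over the ordered pairs of adjacent vertices. -/
noncomputable def adjSum (G : SimpleGraph V) (f : V → V → ℤ) : ℤ :=
  ∑ u, ∑ v, if G.Adj u v then f u v else 0

variable {G : SimpleGraph V}

lemma adjSum_add (f g : V → V → ℤ) :
    adjSum G (fun u v => f u v + g u v) = adjSum G f + adjSum G g := by
  simp only [adjSum, ← sum_add_distrib]
  refine sum_congr rfl fun u _ => sum_congr rfl fun v _ => ?_
  split_ifs <;> simp

lemma adjSum_const_mul (k : ℤ) (f : V → V → ℤ) :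
    adjSum G (fun u v => k * f u v) = k * adjSum G f := by
  simp only [adjSum, mul_sum]
  refine sum_congr rfl fun u _ => sum_congr rfl fun v _ => ?_
  split_ifs <;> simp

lemma adjSum_sub (f g : V → V → ℤ) :
    adjSum G (fun u v => f u v - g u v) = adjSum G f - adjSum G g := by
  simp only [adjSum, ← sum_sub_distrib]
  refine sum_congr rfl fun u _ => sum_congr rfl fun v _ => ?_
  split_ifs <;> simp

lemma adjSum_swap (f : V → V → ℤ) : adjSum G (fun u v => f v u) = adjSum G f := by
  rw [adjSum, sum_comm]
  simp only [adjSum, G.adj_comm]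

lemma two_mul_adjSum (f : V → V → ℤ) :
    2 * adjSum G f = adjSum G (fun u v => f u v + f v u) := by
  rw [adjSum_add, adjSum_swap f, two_mul]

lemma adjSum_le_adjSum {f g : V → V → ℤ} (h : ∀ u v, G.Adj u v → f u v ≤ g u v) :
    adjSum G f ≤ adjSum G g :=
  sum_le_sum fun u _ => sum_le_sum fun v _ => by
    split_ifs with huv
    · exact h u v huv
    · rfl

/-- A function whose symmetrization is nonnegative has a nonnegative sum. -/
lemma adjSum_nonneg_of_symm {f : V → V → ℤ} (h : ∀ u v, G.Adj u v → 0 ≤ f u v + f v u) :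
    0 ≤ adjSum G f := by
  have h1 : adjSum G (fun _ _ => 0) ≤ adjSum G (fun u v => f u v + f v u) := adjSum_le_adjSum h
  rw [← two_mul_adjSum] at h1
  have h0 : adjSum G (fun _ _ => 0) = 0 := by simp [adjSum]
  omega

lemma adjSum_left {d : ℕ} (hreg : G.IsRegularOfDegree d) (k : V → ℤ) :
    adjSum G (fun u _ => k u) = d * ∑ u, k u := by
  rw [adjSum, mul_sum]
  refine sum_congr rfl fun u _ => ?_
  rw [← sum_filter, sum_const, ← SimpleGraph.neighborFinset_eq_filter,
    SimpleGraph.card_neighborFinset_eq_degree, nsmul_eq_mul]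
  congr 2
  convert hreg u

lemma adjSum_propInd_and (P : V → Prop) (Q : V → V → Prop) :
    adjSum G (fun u v => propInd (P u ∧ Q u v)) =
      ∑ u, propInd (P u) * ((univ.filter fun v => G.Adj u v ∧ Q u v).card : ℤ) := by
  refine sum_congr rfl fun u _ => ?_
  by_cases h : P u
  · simp only [h, true_and, propInd, if_true, one_mul, card_filter, Nat.cast_sum]
    refine sum_congr rfl fun v _ => ?_
    by_cases h1 : G.Adj u v <;> by_cases h2 : Q u v <;> simp [h1, h2]
  · simp [h, propInd]

end PairSum

/-- A degree constrained subgraph theorem: in a `d`-regular graph, the `F`-degrees can be chosen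
in the intervals `[s v - 1, s v]` if `s(S) + (d + 1 - s)(T) ≥ e(S, T)` for disjoint `S`, `T`. -/
theorem exists_edgeSetDegree_mem {V : Type*} [Fintype V] {G : SimpleGraph V} {d : ℕ}
    (hreg : G.IsRegularOfDegree d) (s : V → ℤ)
    (h : ∀ S T : V → Prop, (∀ v, ¬ (S v ∧ T v)) →
      adjSum G (fun u v => propInd (S u ∧ T v)) ≤
        ∑ v, (propInd (S v) * s v + propInd (T v) * (d + 1 - s v))) :
    ∃ F : Sym2 V → Prop,
      ∀ v, s v - 1 ≤ edgeSetDegree G F v ∧ (edgeSetDegree G F v : ℤ) ≤ s v := by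
  obtain ⟨F, hF⟩ := Finite.exists_min (degreeDefect G s)
  refine ⟨F, ?_⟩
  by_contra! hcon
  obtain ⟨w, hw⟩ := hcon
  have hwviol : s w < edgeSetDegree G F w ∨ (edgeSetDegree G F w : ℤ) < s w - 1 := by
    by_contra! hc
    exact absurd (hw (by omega)) (by omega)
  have hN : ∀ v, (∀ n, ¬ HasAugmentingWalk G s F n v) → ∀ b, G.Adj v b →
      (F s(v, b) ↔ s v ≤ edgeSetDegree G F v) →
      ¬ (s b ≤ edgeSetDegree G F b ↔ s v ≤ edgeSetDegree G F v) ∧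
        ∀ n, ¬ HasAugmentingWalk G s F n b := by
    intro v hv b hadj hb
    have htype : ¬ (s b ≤ edgeSetDegree G F b ↔ s v ≤ edgeSetDegree G F v) :=
      fun ht => hv 0 ⟨b, hadj, hb, ht⟩
    exact ⟨htype, fun n hn => hv (n + 1) ⟨b, hadj, hb, htype, hn⟩⟩
  have hwN : ∀ n, ¬ HasAugmentingWalk G s F n w := by
    intro n hn
    obtain ⟨F', hF'⟩ := hn.exists_degreeDefect_lt n F w hwviol
    exact absurd (hF F') (by omega)
  set N : V → Prop := fun v => ∀ n, ¬ HasAugmentingWalk G s F n v with hNdef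
  set S : V → Prop := fun v => N v ∧ s v ≤ edgeSetDegree G F v with hS
  set T : V → Prop := fun v => N v ∧ ¬ s v ≤ edgeSetDegree G F v with hT
  have hcut := h S T (by simp only [hS, hT]; tauto)
  have e1 := adjSum_propInd_and (G := G) S (fun u v => F s(u, v))
  have e2 := adjSum_propInd_and (G := G) T (fun u v => F s(u, v))
  have e3 := adjSum_left hreg (fun u => propInd (T u))
  have e4 : 0 ≤ adjSum G fun u v => propInd (S u ∧ T v) -
      propInd (S u ∧ F s(u, v)) - propInd (T u) +
        propInd (T u ∧ F s(u, v)) := by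
    refine adjSum_nonneg_of_symm fun u v huv => ?_
    have h1 : N u → (F s(u, v) ↔ s u ≤ edgeSetDegree G F u) →
      ¬ (s v ≤ edgeSetDegree G F v ↔ s u ≤ edgeSetDegree G F u) ∧ N v := fun h => hN u h v huv
    have h2 : N v → (F s(v, u) ↔ s v ≤ edgeSetDegree G F v) →
      ¬ (s u ≤ edgeSetDegree G F u ↔ s v ≤ edgeSetDegree G F v) ∧ N u := fun h => hN v h u huv.symm
    rw [Sym2.eq_swap (a := v)] at h2 ⊢
    simp only [hS, hT]
    generalize N u = a at h1 h2 ⊢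
    generalize N v = b at h1 h2 ⊢
    generalize F s(u, v) = c at h1 h2 ⊢
    generalize (s u ≤ edgeSetDegree G F u) = p at h1 h2 ⊢
    generalize (s v ≤ edgeSetDegree G F v) = q at h1 h2 ⊢
    unfold propInd
    clear * - h1 h2
    by_cases a <;> by_cases b <;> by_cases c <;> by_cases p <;> by_cases q <;> simp_all
  rw [adjSum_add, adjSum_sub, adjSum_sub, e1, e2, e3] at e4
  have hlt : ∑ v, (propInd (S v) * s v + propInd (T v) * (d + 1 - s v)) <
      ∑ v, (propInd (S v) * (edgeSetDegree G F v : ℤ) + d * propInd (T v) -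
        propInd (T v) * (edgeSetDegree G F v : ℤ)) := by
    refine sum_lt_sum (fun v _ => ?_) ⟨w, mem_univ w, ?_⟩
    · by_cases hv : N v <;> by_cases hv' : s v ≤ edgeSetDegree G F v <;>
        simp [propInd, hS, hT, hv, hv'] <;> omega
    · have : N w := hwN
      by_cases hv' : s w ≤ edgeSetDegree G F w <;> simp [propInd, hS, hT, this, hv'] <;> omega
  simp only [sum_sub_distrib, sum_add_distrib, ← mul_sum, edgeSetDegree] at hlt hcut
  linarith

/-- Every irreflexive symmetric relation on a finite type has a proper coloring in which every
vertex sees all smaller colors, and hence has at least as many neighbors of smaller color as its color. -/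
lemma exists_greedy_coloring {V : Type*} [Fintype V] (H : V → V → Prop) (hirr : ∀ v, ¬ H v v)
    (hsymm : ∀ u v, H u v → H v u) :
    ∃ g : V → ℕ, (∀ u v, H u v → g u ≠ g v) ∧
      ∀ u, g u ≤ (univ.filter fun v => H u v ∧ g v < g u).card := by
  let P : (V → ℕ) → Prop := fun g => ∀ u v, H u v → g u ≠ g v
  have hex : ∃ g, P g := by
    refine ⟨fun v => Fintype.equivFin V v, fun u v huv h => hirr u ?_⟩
    have : u = v := (Fintype.equivFin V).injective (Fin.val_injective h)
    rwa [← this] at huv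
  obtain ⟨g, hg, hmin⟩ := exists_minimalFor_of_wellFoundedLT P (fun g => ∑ v, g v) hex
  refine ⟨g, hg, fun u => ?_⟩
  have hsub : range (g u) ⊆ (univ.filter fun v => H u v ∧ g v < g u).image g := by
    intro c hc
    rw [mem_range] at hc
    by_contra hcon
    simp only [mem_image, mem_filter, mem_univ, true_and, not_exists, not_and] at hcon
    have hP : P (Function.update g u c) := by
      intro x y hxy
      by_cases hx : x = u <;> by_cases hy : y = u
      · subst hx; subst hy; exact absurd hxy (hirr _)
      · subst hx
        simp only [Function.update_self, Function.update_of_ne hy]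
        exact fun h => hcon y ⟨hxy, h ▸ hc⟩ h.symm
      · subst hy
        simp only [Function.update_self, Function.update_of_ne hx]
        exact fun h => hcon x ⟨hsymm _ _ hxy, h ▸ hc⟩ h
      · simp only [Function.update_of_ne hx, Function.update_of_ne hy]
        exact hg x y hxy
    have hlt : ∑ v, Function.update g u c v < ∑ v, g v := by
      refine sum_lt_sum (fun v _ => ?_) ⟨u, mem_univ u, by simpa using hc⟩
      by_cases hv : v = u
      · subst hv; simpa using hc.le
      · simp [hv]
    exact absurd (hmin hP hlt.le) (not_le.2 hlt)
  simpa using (card_le_card hsub).trans card_image_le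

/-- A bipartition maximizing `2 e(A, B) + δ (|A| - |B|)` satisfies the exchange inequality
obtained by moving a set `X` to the other side. -/
lemma exists_cut {V : Type*} [Fintype V] (G : SimpleGraph V) (δ : ℤ) :
    ∃ c : V → Prop, ∀ X : V → Prop,
      adjSum G (fun u v => propInd (X u ∧ ¬ X v ∧ (c u ↔ c v))) ≤
        adjSum G (fun u v => propInd (X u ∧ ¬ X v ∧ ¬ (c u ↔ c v))) +
          δ * ∑ u, (propInd (X u) * (2 * propInd (c u) - 1)) := by
  obtain ⟨c, hc⟩ := Finite.exists_max fun c : V → Prop =>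
    adjSum G (fun u v => propInd (¬ (c u ↔ c v))) + δ * ∑ u, (2 * propInd (c u) - 1)
  refine ⟨c, fun X => ?_⟩
  have h := hc fun u => (c u ↔ ¬ X u)
  have h1 : adjSum G (fun u v => propInd (¬ ((c u ↔ ¬ X u) ↔ (c v ↔ ¬ X v)))) =
      adjSum G (fun u v => propInd (¬ (c u ↔ c v))) +
      (2 * adjSum G (fun u v => propInd (X u ∧ ¬ X v ∧ (c u ↔ c v))) -
        2 * adjSum G (fun u v => propInd (X u ∧ ¬ X v ∧ ¬ (c u ↔ c v)))) := by
    rw [two_mul_adjSum, two_mul_adjSum, ← adjSum_sub, ← adjSum_add]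
    congr 1
    ext u v
    by_cases X u <;> by_cases X v <;> by_cases c u <;> by_cases c v <;> simp [propInd, *]
  have h2 : (∑ u, (2 * propInd (c u ↔ ¬ X u) - 1)) =
      (∑ u, (2 * propInd (c u) - 1)) -
        2 * ∑ u, (propInd (X u) * (2 * propInd (c u) - 1)) := by
    rw [mul_sum, ← sum_sub_distrib]
    refine sum_congr rfl fun u _ => ?_
    by_cases X u <;> by_cases c u <;> simp [propInd, *]
  simp only [h1, h2] at h
  linarith

/-- The target total degrees `p - g` on the side `c` and `p + 1 + g` on the other side, where
`d = p + q`, satisfy the hypothesis of the degree constrained subgraph theorem. -/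
lemma adjSum_le_sum_target {V : Type*} [Fintype V] {G : SimpleGraph V} {d : ℕ}
    (hreg : G.IsRegularOfDegree d) {p q : ℤ} (hd : (d : ℤ) = p + q) (hpq : q ≤ p)
    (hpq' : p ≤ q + 1) {c : V → Prop}
    (hc : ∀ X : V → Prop,
      adjSum G (fun u v => propInd (X u ∧ ¬ X v ∧ (c u ↔ c v))) ≤
        adjSum G (fun u v => propInd (X u ∧ ¬ X v ∧ ¬ (c u ↔ c v))) +
          (p - q) * ∑ u, (propInd (X u) * (2 * propInd (c u) - 1)))
    {g : V → ℕ}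
    (hg : ∀ u, g u ≤ (univ.filter fun v => (G.Adj u v ∧ (c u ↔ c v)) ∧ g v < g u).card)
    (S T : V → Prop) (hST : ∀ v, ¬ (S v ∧ T v)) :
    adjSum G (fun u v => propInd (S u ∧ T v)) ≤
      ∑ v, (propInd (S v) * (if c v then p - g v else p + 1 + g v) +
        propInd (T v) * (d + 1 - if c v then p - g v else p + 1 + g v)) := by
  set X : V → Prop := fun v => (S v ∧ c v) ∨ (T v ∧ ¬ c v) with hX
  set Y : V → Prop := fun v => (S v ∧ ¬ c v) ∨ (T v ∧ c v) with hY
  have hXc := hc X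
  have hYc := hc Y
  have hdX := adjSum_left hreg (fun u => propInd (X u))
  have hdY := adjSum_left hreg (fun u => propInd (Y u))
  have hgX : ∑ u, (propInd (X u) * (g u : ℤ)) ≤
      adjSum G fun u v => propInd (X u ∧ (c u ↔ c v) ∧ g v < g u) := by
    rw [adjSum_propInd_and]
    refine sum_le_sum fun u _ => ?_
    have := hg u
    simp only [and_assoc] at this
    by_cases h : X u
    · simp only [propInd, h, if_true, one_mul, Nat.cast_le]
      convert this
    · simp [propInd, h]
  have hpair : 0 ≤ adjSum G fun u v => propInd (X u) + propInd (Y u) -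
      2 * propInd (X u ∧ (c u ↔ c v) ∧ g v < g u) -
      propInd (X u ∧ ¬ X v ∧ ¬ (c u ↔ c v)) +
      propInd (X u ∧ ¬ X v ∧ (c u ↔ c v)) -
      propInd (Y u ∧ ¬ Y v ∧ ¬ (c u ↔ c v)) +
      propInd (Y u ∧ ¬ Y v ∧ (c u ↔ c v)) -
      2 * propInd (S u ∧ T v) := by
    refine adjSum_nonneg_of_symm fun u v _ => ?_
    have hu := hST u
    have hv := hST v
    have hasymm : ¬ (g v < g u ∧ g u < g v) := by omega
    simp only [hX, hY]
    generalize hga : (g v < g u) = a at hasymm ⊢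
    generalize hgb : (g u < g v) = b at hasymm ⊢
    unfold propInd
    clear * - hu hv hasymm
    by_cases S u <;> by_cases T u <;> by_cases c u <;> by_cases S v <;> by_cases T v <;>
      by_cases c v <;> simp_all <;> by_cases a <;> by_cases b <;> simp_all
  simp only [adjSum_add, adjSum_sub, adjSum_const_mul, hdX, hdY] at hpair
  have hsum : 2 * ∑ v, (propInd (S v) * (if c v then p - g v else p + 1 + g v) +
        propInd (T v) * (d + 1 - if c v then p - g v else p + 1 + g v)) ≥
      ∑ v, ((d : ℤ) * propInd (X v) + d * propInd (Y v) +
        (p - q) * (propInd (X v) * (2 * propInd (c v) - 1)) +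
        (p - q) * (propInd (Y v) * (2 * propInd (c v) - 1)) -
        2 * (propInd (X v) * (g v : ℤ))) := by
    rw [mul_sum, ge_iff_le]
    refine sum_le_sum fun v _ => ?_
    have hv := hST v
    simp only [hX, hY, hd]
    by_cases S v <;> by_cases T v <;> by_cases c v <;> simp_all [propInd] <;> linarith
  simp only [sum_sub_distrib, sum_add_distrib, ← mul_sum] at hsum
  simp only [sum_add_distrib, mul_add] at hsum ⊢
  linarith

/-- Every finite regular simple graph admits a locally irregular total
coloring with 2 colors, i.e. `tlir(G) ≤ 2`. -/
theorem stmt1 {V : Type*} [Fintype V] (G : SimpleGraph V) (d : ℕ)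
    (hreg : G.IsRegularOfDegree d) : HasTLIR G 2 := by
  obtain ⟨p, q, hd, hpq, hpq'⟩ : ∃ p q : ℤ, (d : ℤ) = p + q ∧ q ≤ p ∧ p ≤ q + 1 :=
    ⟨d - d / 2, d / 2, by omega, by omega, by omega⟩
  obtain ⟨c, hc⟩ := exists_cut G (p - q)
  obtain ⟨g, hproper, hg⟩ := exists_greedy_coloring (fun u v => G.Adj u v ∧ (c u ↔ c v))
    (fun v h => h.1.ne rfl) (fun u v h => ⟨h.1.symm, h.2.symm⟩)
  set s : V → ℤ := fun v => if c v then p - g v else p + 1 + g v with hs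
  have hsne : ∀ u v, G.Adj u v → s u ≠ s v := by
    intro u v huv
    have := hproper u v
    simp only [hs]
    by_cases hu : c u <;> by_cases hv : c v <;> simp [hu, hv, huv] at this ⊢ <;> omega
  obtain ⟨F, hF⟩ := exists_edgeSetDegree_mem hreg s
    (adjSum_le_sum_target hreg hd hpq hpq' hc (by convert hg))
  refine ⟨fun v => if s v = edgeSetDegree G F v then 0 else 1, fun e => if F e then 1 else 0, ?_⟩
  set cV : V → Fin 2 := fun v => if s v = edgeSetDegree G F v then 0 else 1 with hcV
  set cE : Sym2 V → Fin 2 := fun e => if F e then 1 else 0 with hcE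
  have hone : ∀ v, (totalDeg G cV cE 1 v : ℤ) = s v := by
    intro v
    have h1 : (univ.filter fun u => G.Adj v u ∧ cE s(v, u) = 1).card = edgeSetDegree G F v := by
      simp [edgeSetDegree, hcE]
    have := hF v
    rw [totalDeg, h1]
    by_cases h : s v = edgeSetDegree G F v
    · simp [hcV, h]
    · simp only [hcV, h, if_false, if_true]
      push_cast
      omega
  have htotal : ∀ v, totalDeg G cV cE 0 v + totalDeg G cV cE 1 v = d + 1 := by
    intro v
    have hsplit := card_filter_add_card_filter_not (s := G.neighborFinset v)
      (fun u => F s(v, u))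
    rw [G.card_neighborFinset_eq_degree, hreg v, SimpleGraph.neighborFinset_eq_filter,
      filter_filter, filter_filter] at hsplit
    by_cases h : s v = edgeSetDegree G F v <;> simp [totalDeg, hcV, hcE, h] <;> omega
  intro u v huv
  have hne := hsne u v huv
  have hu := hone u
  have hv := hone v
  have htu := htotal u
  have htv := htotal v
  generalize cE s(u, v) = i
  fin_cases i <;> simp only [Fin.zero_eta, Fin.mk_one] <;> omega
end

section
/- If G is a finite cactus graph, then G admits a locally irregular total coloring with 2 colors, i.e., tlir(G) ≤ 2. -/
open Finset
open scoped Classical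

variable {V : Type*}

/-- A cactus: a connected simple graph whose cycles are pairwise edge-disjoint,
i.e. any two cycles sharing an edge have the same edge set (equivalently, every
edge lies on at most one cycle). -/
def IsCactus {V : Type*} (G : SimpleGraph V) : Prop :=
  G.Connected ∧
    ∀ ⦃u w : V⦄ (p : G.Walk u u) (q : G.Walk w w),
      p.IsCycle → q.IsCycle → (∃ e, e ∈ p.edges ∧ e ∈ q.edges) →
        (∀ e, e ∈ p.edges ↔ e ∈ q.edges)

/-- A level function together with a choice of parents, as provided by a breadth-first search. -/
structure IsLeveling (G : SimpleGraph V) (l : V → ℕ) (p : V → V) : Prop where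
  eq_of_zero : ∀ u v, l u = 0 → l v = 0 → u = v
  adj_parent : ∀ v, l v ≠ 0 → G.Adj v (p v)
  parent_level : ∀ v, l v ≠ 0 → l (p v) + 1 = l v
  mod_two_ne : ∀ u v, G.Adj u v → l u ≠ l v → l u % 2 ≠ l v % 2

/-- Distances from a root of a connected graph form a leveling. -/
theorem SimpleGraph.Connected.exists_isLeveling {G : SimpleGraph V} (hG : G.Connected) :
    ∃ l p, IsLeveling G l p := by
  obtain ⟨r⟩ := hG.nonempty
  have key : ∀ v, ∃ w, G.dist r v ≠ 0 → G.Adj v w ∧ G.dist r w + 1 = G.dist r v := by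
    intro v
    by_cases h : G.dist r v = 0
    · exact ⟨v, fun h' => absurd h h'⟩
    · obtain ⟨q, hq⟩ := hG.exists_walk_length_eq_dist v r
      cases q with
      | nil => simp at h
      | @cons _ w _ hvw q =>
        refine ⟨w, fun _ => ⟨hvw, ?_⟩⟩
        have h1 : G.dist w r ≤ q.length := SimpleGraph.dist_le q
        have h2 := hvw.diff_dist_adj (u := r)
        rw [SimpleGraph.Walk.length_cons] at hq
        rw [SimpleGraph.dist_comm] at h1 hq
        omega
  choose p hp using key
  refine ⟨G.dist r, p, ⟨?_, fun v hv => (hp v hv).1, fun v hv => (hp v hv).2, ?_⟩⟩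
  · intro u v hu hv
    rw [hG.dist_eq_zero_iff] at hu hv
    exact hu.symm.trans hv
  · intro u v huv hne
    have h := huv.diff_dist_adj (u := r)
    omega

namespace IsLeveling

variable {G : SimpleGraph V} {l : V → ℕ} {p : V → V}

/-- Two vertices on the same level are joined by a path through lower levels. -/
theorem exists_path (h : IsLeveling G l p) (n : ℕ) : ∀ a b : V, l a = n → l b = n →
    ∃ q : G.Walk a b, q.IsPath ∧ (∀ x ∈ q.support, l x ≤ n) ∧
      (∀ x y, s(x, y) ∈ q.edges → l x ≠ l y) ∧
      (a ≠ b → s(a, p a) ∈ q.edges ∧ s(b, p b) ∈ q.edges) := by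
  induction n with
  | zero =>
    intro a b ha hb
    obtain rfl := h.eq_of_zero a b ha hb
    exact ⟨.nil, by simp [ha]⟩
  | succ n ih =>
    intro a b ha hb
    by_cases hab : a = b
    · subst hab
      exact ⟨.nil, by simp [ha]⟩
    · have hpa := h.parent_level a (by omega)
      have hpb := h.parent_level b (by omega)
      have hadja := h.adj_parent a (by omega)
      have hadjb := h.adj_parent b (by omega)
      obtain ⟨q, hq, hs, he, -⟩ := ih (p a) (p b) (by omega) (by omega)
      have ha' : a ∉ q.support := fun hx => by have := hs a hx; omega
      have hb' : b ∉ q.support := fun hx => by have := hs b hx; omega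
      refine ⟨.cons hadja (q.concat hadjb.symm), ?_, ?_, ?_, fun _ => ?_⟩
      · rw [SimpleGraph.Walk.cons_isPath_iff, SimpleGraph.Walk.concat_isPath_iff]
        simp [hq, ha', hb', hab]
      · intro x hx
        simp only [SimpleGraph.Walk.support_cons, SimpleGraph.Walk.support_concat,
          List.mem_cons, List.mem_append, List.not_mem_nil, or_false] at hx
        rcases hx with rfl | hx | rfl
        · omega
        · have := hs x hx; omega
        · omega
      · intro x y hxy
        simp only [SimpleGraph.Walk.edges_cons, SimpleGraph.Walk.edges_concat,
          List.concat_eq_append, List.mem_cons, List.mem_append, List.not_mem_nil, or_false,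
          Sym2.eq_iff] at hxy
        rcases hxy with (⟨rfl, rfl⟩ | ⟨rfl, rfl⟩) | hxy | (⟨rfl, rfl⟩ | ⟨rfl, rfl⟩)
        · omega
        · omega
        · exact he x y hxy
        · omega
        · omega
      · simp [SimpleGraph.Walk.edges_concat, Sym2.eq_swap]

/-- A horizontal edge lies on a cycle through the parent edges of both its ends, and this cycle
has no other horizontal edge. -/
theorem exists_cycle (h : IsLeveling G l p) {a b : V} (hab : G.Adj a b) (hl : l a = l b) :
    ∃ q : G.Walk b b, q.IsCycle ∧ s(a, b) ∈ q.edges ∧ s(a, p a) ∈ q.edges ∧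
      s(b, p b) ∈ q.edges ∧ ∀ x y, s(x, y) ∈ q.edges → l x = l y → s(x, y) = s(a, b) := by
  obtain ⟨q, hq, -, he, hp⟩ := h.exists_path (l a) a b rfl hl.symm
  obtain ⟨h1, h2⟩ := hp hab.ne
  refine ⟨.cons hab.symm q, ?_, ?_, ?_, ?_, ?_⟩
  · rw [SimpleGraph.Walk.cons_isCycle_iff]
    exact ⟨hq, fun hmem => he b a hmem hl.symm⟩
  · simp [Sym2.eq_swap]
  · simp [h1]
  · simp [h2]
  · intro x y hxy hlxy
    rw [SimpleGraph.Walk.edges_cons, List.mem_cons] at hxy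
    rcases hxy with hxy | hxy
    · rw [hxy, Sym2.eq_swap]
    · exact absurd hlxy (he x y hxy)

/-- In a cactus every cycle through a horizontal edge contains the parent edges of its ends. -/
theorem parent_mem_edges (h : IsLeveling G l p) (hG : IsCactus G) {a b : V} (hab : G.Adj a b)
    (hl : l a = l b) {u : V} (q : G.Walk u u) (hq : q.IsCycle) (hmem : s(a, b) ∈ q.edges) :
    s(a, p a) ∈ q.edges ∧ s(b, p b) ∈ q.edges := by
  obtain ⟨q', hq', h1, h2, h3, -⟩ := h.exists_cycle hab hl
  have := hG.2 q q' hq hq' ⟨_, hmem, h1⟩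
  exact ⟨(this _).2 h2, (this _).2 h3⟩

/-- In a cactus the horizontal edges form a matching. -/
theorem eq_of_horizontal (h : IsLeveling G l p) (hG : IsCactus G) {a b b' : V} (hab : G.Adj a b)
    (hl : l a = l b) (hab' : G.Adj a b') (hl' : l a = l b') : b = b' := by
  obtain ⟨q, hq, h1, h2, -, h4⟩ := h.exists_cycle hab hl
  obtain ⟨q', hq', h1', h2', -, -⟩ := h.exists_cycle hab' hl'
  have hmem := (hG.2 q q' hq hq' ⟨_, h2, h2'⟩ _).2 h1'
  exact (Sym2.congr_right.1 (h4 a b' hmem hl')).symm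

end IsLeveling

/-- A function can be modified so that it changes parity along any given finite set of bridges,
without losing any parity change along other edges. -/
theorem SimpleGraph.exists_parity_ne_of_isBridge (H : SimpleGraph V) (f : V → ℕ)
    (S : Finset (Sym2 V)) (hS : ∀ e ∈ S, H.IsBridge e) :
    ∃ ρ : V → ℕ, ∀ u v, H.Adj u v → (f u % 2 ≠ f v % 2 ∨ s(u, v) ∈ S) →
      ρ u % 2 ≠ ρ v % 2 := by
  induction S using Finset.induction_on with
  | empty => exact ⟨f, fun u v _ h => by simpa using h⟩
  | insert e S _ ih =>
    obtain ⟨ρ, hρ⟩ := ih fun e he => hS e (Finset.mem_insert_of_mem he)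
    have hbridge := hS e (Finset.mem_insert_self e S)
    induction e using Sym2.ind with
    | _ a b =>
    by_cases hcut : ρ a % 2 ≠ ρ b % 2
    · refine ⟨ρ, fun u v huv h => ?_⟩
      rw [Finset.mem_insert, Sym2.eq_iff] at h
      rcases h with h | (⟨rfl, rfl⟩ | ⟨rfl, rfl⟩) | h
      · exact hρ u v huv (.inl h)
      · exact hcut
      · exact hcut.symm
      · exact hρ u v huv (.inr h)
    · rw [SimpleGraph.isBridge_iff] at hbridge
      refine ⟨fun v => if (H.deleteEdges {s(a, b)}).Reachable a v then ρ v + 1 else ρ v,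
        fun u v huv h => ?_⟩
      by_cases he : s(u, v) = s(a, b)
      · rcases Sym2.eq_iff.1 he with ⟨rfl, rfl⟩ | ⟨rfl, rfl⟩
        · simp only [SimpleGraph.Reachable.refl, if_true, if_neg hbridge]
          omega
        · simp only [SimpleGraph.Reachable.refl, if_true, if_neg hbridge]
          omega
      · have hadj : (H.deleteEdges {s(a, b)}).Adj u v := by
          rw [SimpleGraph.deleteEdges_adj]
          exact ⟨huv, he⟩
        have hiff : (H.deleteEdges {s(a, b)}).Reachable a u ↔
            (H.deleteEdges {s(a, b)}).Reachable a v :=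
          ⟨fun h => h.trans hadj.reachable, fun h => h.trans hadj.symm.reachable⟩
        have hne : ρ u % 2 ≠ ρ v % 2 := hρ u v huv <| by
          rw [Finset.mem_insert] at h
          tauto
        simp only [hiff]
        split_ifs <;> omega

section Coloring

variable [Fintype V] (G : SimpleGraph V) (ρ : V → ℕ)

/-- The vertex coloring making the total degree of each vertex `v` in color `0` congruent to
`ρ v` modulo `2`. -/
noncomputable def parityColoring (c : Sym2 V → Fin 2) (v : V) : Fin 2 :=
  if ((univ.filter fun u => G.Adj v u ∧ c s(v, u) = 0).card + ρ v) % 2 = 1 then 0 else 1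

theorem card_filter_add_card_filter (c : Sym2 V → Fin 2) (v : V) :
    (univ.filter fun u => G.Adj v u ∧ c s(v, u) = 0).card +
      (univ.filter fun u => G.Adj v u ∧ c s(v, u) = 1).card = G.degree v := by
  have h := Finset.card_filter_add_card_filter_not (s := univ.filter fun u => G.Adj v u)
    (fun u => c s(v, u) = 0)
  have hne (u : V) : ¬ c s(v, u) = 0 ↔ c s(v, u) = 1 := by omega
  simp only [Finset.filter_filter, hne] at h
  rw [h, ← SimpleGraph.card_neighborFinset_eq_degree, SimpleGraph.neighborFinset_eq_filter]

theorem totalDeg_zero (c : Sym2 V → Fin 2) (v : V) :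
    totalDeg G (parityColoring G ρ c) c 0 v =
      (univ.filter fun u => G.Adj v u ∧ c s(v, u) = 0).card +
        ((univ.filter fun u => G.Adj v u ∧ c s(v, u) = 0).card + ρ v) % 2 := by
  unfold totalDeg parityColoring
  split_ifs with h1 h2 <;> omega

theorem totalDeg_one (c : Sym2 V → Fin 2) (v : V) :
    totalDeg G (parityColoring G ρ c) c 1 v =
      (univ.filter fun u => G.Adj v u ∧ c s(v, u) = 1).card +
        (1 - ((univ.filter fun u => G.Adj v u ∧ c s(v, u) = 0).card + ρ v) % 2) := by
  unfold totalDeg parityColoring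
  split_ifs with h1 h2 <;> omega

theorem totalDeg_ne_of_zero {c : Sym2 V → Fin 2} {u v : V} (hc : c s(u, v) = 0)
    (h : ρ u % 2 ≠ ρ v % 2) :
    totalDeg G (parityColoring G ρ c) c (c s(u, v)) u ≠
      totalDeg G (parityColoring G ρ c) c (c s(u, v)) v := by
  rw [hc, totalDeg_zero, totalDeg_zero]
  omega

theorem totalDeg_ne_of_one {c : Sym2 V → Fin 2} {u v : V} (hc : c s(u, v) = 1)
    (h : (ρ u + G.degree u) % 2 ≠ (ρ v + G.degree v) % 2) :
    totalDeg G (parityColoring G ρ c) c (c s(u, v)) u ≠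
      totalDeg G (parityColoring G ρ c) c (c s(u, v)) v := by
  rw [hc, totalDeg_one, totalDeg_one]
  have := card_filter_add_card_filter G c u
  have := card_filter_add_card_filter G c v
  omega

theorem totalDeg_congr {c c' : Sym2 V → Fin 2} {v : V}
    (h : ∀ u, G.Adj v u → c s(v, u) = c' s(v, u)) (i : Fin 2) :
    totalDeg G (parityColoring G ρ c) c i v = totalDeg G (parityColoring G ρ c') c' i v := by
  have key (j : Fin 2) : (univ.filter fun u => G.Adj v u ∧ c s(v, u) = j) =
      univ.filter fun u => G.Adj v u ∧ c' s(v, u) = j := by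
    ext u
    simp only [Finset.mem_filter, Finset.mem_univ, true_and, and_congr_right_iff]
    intro hu
    rw [h u hu]
  unfold totalDeg parityColoring
  rw [key, key]

/-- Splitting off two neighbors `a` and `b` when counting incident edges of a given color. -/
theorem card_filter_eq_add_two {v a b : V} (ha : G.Adj v a) (hb : G.Adj v b) (hab : a ≠ b)
    (c : Sym2 V → Fin 2) (i : Fin 2) :
    (univ.filter fun u => G.Adj v u ∧ c s(v, u) = i).card =
      (univ.filter fun u => (G.Adj v u ∧ u ≠ a ∧ u ≠ b) ∧ c s(v, u) = i).card +
        (if c s(v, a) = i then 1 else 0) + (if c s(v, b) = i then 1 else 0) := by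
  rw [Finset.card_filter, Finset.card_filter,
    ← (Finset.sum_ite_eq univ a fun u => if c s(v, u) = i then 1 else 0).trans
      (if_pos (Finset.mem_univ a)),
    ← (Finset.sum_ite_eq univ b fun u => if c s(v, u) = i then 1 else 0).trans
      (if_pos (Finset.mem_univ b)),
    ← Finset.sum_add_distrib, ← Finset.sum_add_distrib]
  refine Finset.sum_congr rfl fun u _ => ?_
  by_cases h1 : u = a
  · subst h1; simp [ha, hab, hab.symm]
  · by_cases h2 : u = b
    · subst h2; simp [hb, h1, hab]
    · simp [h1, h2, Ne.symm h1, Ne.symm h2]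

/-- Recoloring an edge `ab` and one further edge at each of its ends is enough to make `ab`
satisfy the local irregularity condition, when the parities at `a` and `b` agree. -/
theorem exists_recoloring {a b a' b' : V} (hab : G.Adj a b) (ha : G.Adj a a') (hb : G.Adj b b')
    (hne_a : b ≠ a') (hne_b : a ≠ b') (hdeg : G.degree a % 2 = G.degree b % 2)
    (hρ : ρ a % 2 = ρ b % 2) (c : Sym2 V → Fin 2) :
    ∃ c' : Sym2 V → Fin 2,
      (∀ e, e ≠ s(a, b) → e ≠ s(a, a') → e ≠ s(b, b') → c' e = c e) ∧
      totalDeg G (parityColoring G ρ c') c' (c' s(a, b)) a ≠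
        totalDeg G (parityColoring G ρ c') c' (c' s(a, b)) b := by
  let g (i j k : Fin 2) (e : Sym2 V) : Fin 2 :=
    if e = s(a, b) then i else if e = s(a, a') then j else if e = s(b, b') then k else c e
  have hg (i j k e) (h1 : e ≠ s(a, b)) (h2 : e ≠ s(a, a')) (h3 : e ≠ s(b, b')) :
      g i j k e = c e := by simp [g, h1, h2, h3]
  have hg1 (i j k) : g i j k s(a, b) = i := by simp [g]
  have hg1' (i j k) : g i j k s(b, a) = i := by rw [Sym2.eq_swap, hg1]
  have hg2 (i j k) : g i j k s(a, a') = j := by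
    have : a' ≠ b := hne_a.symm
    simp [g, this, hab.ne]
  have hg3 (i j k) : g i j k s(b, b') = k := by
    have h1 : b' ≠ a := hne_b.symm
    have h2 : b ≠ a := hab.ne.symm
    simp [g, h1, h2, hne_a]
  have hga (i j k t : Fin 2) := card_filter_eq_add_two G hab ha hne_a (g i j k) t
  have hgb (i j k t : Fin 2) := card_filter_eq_add_two G hab.symm hb hne_b (g i j k) t
  have hA (i j k t : Fin 2) :
      (univ.filter fun u => (G.Adj a u ∧ u ≠ b ∧ u ≠ a') ∧ g i j k s(a, u) = t) =
        univ.filter fun u => (G.Adj a u ∧ u ≠ b ∧ u ≠ a') ∧ c s(a, u) = t := by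
    refine Finset.filter_congr fun u _ => and_congr_right fun ⟨_, h1, h2⟩ => ?_
    rw [hg]
    · simp [h1, hab.ne]
    · simp [h2, ha.ne]
    · simp [hab.ne, hne_b]
  have hB (i j k t : Fin 2) :
      (univ.filter fun u => (G.Adj b u ∧ u ≠ a ∧ u ≠ b') ∧ g i j k s(b, u) = t) =
        univ.filter fun u => (G.Adj b u ∧ u ≠ a ∧ u ≠ b') ∧ c s(b, u) = t := by
    refine Finset.filter_congr fun u _ => and_congr_right fun ⟨_, h1, h2⟩ => ?_
    rw [hg]
    · simp [hab.ne.symm, h1]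
    · simp [hab.ne.symm, hne_a]
    · simp [h2, hb.ne]
  simp only [hA, hg1, hg2] at hga
  simp only [hB, hg1', hg3] at hgb
  by_contra! hcon
  have hcon' (i j k) := hcon (g i j k) (hg i j k)
  simp only [hg1] at hcon'
  have h1 := hcon' 0 0 1
  have h2 := hcon' 0 1 0
  have h3 := hcon' 1 0 1
  have h4 := hcon' 1 1 0
  have hda := card_filter_add_card_filter G (g 0 0 1) a
  have hdb := card_filter_add_card_filter G (g 0 0 1) b
  simp only [totalDeg_zero, totalDeg_one, hga, hgb, Fin.isValue, reduceIte, zero_ne_one,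
    one_ne_zero] at h1 h2 h3 h4 hda hdb
  omega

end Coloring

/-- The horizontal edges whose ends and the parents of these all have degrees of the same
parity. -/
def IsMonoHorizontal [Fintype V] (G : SimpleGraph V) (l : V → ℕ) (p : V → V) (a b : V) : Prop :=
  G.Adj a b ∧ l a = l b ∧ G.degree a % 2 = G.degree b % 2 ∧
    G.degree a % 2 = G.degree (p a) % 2 ∧ G.degree b % 2 = G.degree (p b) % 2

theorem IsMonoHorizontal.symm [Fintype V] {G : SimpleGraph V} {l : V → ℕ} {p : V → V} {a b : V}
    (h : IsMonoHorizontal G l p a b) : IsMonoHorizontal G l p b a :=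
  ⟨h.1.symm, h.2.1.symm, h.2.2.1.symm, h.2.2.2.2, h.2.2.2.1⟩

/-- In a cactus some function changes parity along each edge whose ends have degrees of the same
parity, except possibly along those singled out by `IsMonoHorizontal`. -/
theorem IsLeveling.exists_parity_ne [Fintype V] {G : SimpleGraph V} {l : V → ℕ} {p : V → V}
    (h : IsLeveling G l p) (hG : IsCactus G) :
    ∃ ρ : V → ℕ, ∀ u v, G.Adj u v → G.degree u % 2 = G.degree v % 2 →
      ¬ IsMonoHorizontal G l p u v → ρ u % 2 ≠ ρ v % 2 := by
  let H : SimpleGraph V :=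
    { Adj := fun u v => G.Adj u v ∧ G.degree u % 2 = G.degree v % 2 ∧
        ¬ IsMonoHorizontal G l p u v
      symm := ⟨fun u v huv => ⟨huv.1.symm, huv.2.1.symm, fun h' => huv.2.2 h'.symm⟩⟩
      loopless := ⟨fun u hu => hu.1.ne rfl⟩ }
  have hle : H ≤ G := fun u v huv => huv.1
  obtain ⟨ρ, hρ⟩ := H.exists_parity_ne_of_isBridge l (univ.filter fun e => H.IsBridge e)
    fun e he => (Finset.mem_filter.1 he).2
  refine ⟨ρ, fun u v huv hdeg hF => ?_⟩
  have hadj : H.Adj u v := ⟨huv, hdeg, hF⟩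
  refine hρ u v hadj ?_
  by_cases hl : l u = l v
  · refine .inr (Finset.mem_filter.2 ⟨Finset.mem_univ _, ?_⟩)
    rw [SimpleGraph.isBridge_iff_forall_cycle_notMem hadj]
    intro w q hq hmem
    have hpar := h.parent_mem_edges hG huv hl (q.mapLe hle) (hq.mapLe hle)
      (by rwa [SimpleGraph.Walk.edges_mapLe_eq_edges])
    rw [SimpleGraph.Walk.edges_mapLe_eq_edges] at hpar
    have hu : H.Adj u (p u) := q.adj_of_mem_edges hpar.1
    have hv : H.Adj v (p v) := q.adj_of_mem_edges hpar.2
    exact hF ⟨huv, hl, hdeg, hu.2.1, hv.2.1⟩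
  · exact .inl (h.mod_two_ne u v huv hl)

/-- Every finite cactus graph admits a locally irregular total coloring
with 2 colors, i.e. `tlir(G) ≤ 2`. -/
theorem stmt3 {V : Type*} [Fintype V] (G : SimpleGraph V) (hG : IsCactus G) :
    HasTLIR G 2 := by
  obtain ⟨l, p, h⟩ := hG.1.exists_isLeveling
  obtain ⟨ρ, hρ⟩ := h.exists_parity_ne hG
  let base (e : Sym2 V) : Fin 2 := if ∃ u v, e = s(u, v) ∧ ρ u % 2 ≠ ρ v % 2 then 0 else 1
  have hbase0 (u v) (huv : ρ u % 2 ≠ ρ v % 2) : base s(u, v) = 0 :=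
    if_pos ⟨u, v, rfl, huv⟩
  have hbase1 (u v) (huv : ρ u % 2 = ρ v % 2) : base s(u, v) = 1 := by
    refine if_neg ?_
    rintro ⟨a, b, hab, hne⟩
    rcases Sym2.eq_iff.1 hab with ⟨rfl, rfl⟩ | ⟨rfl, rfl⟩
    · exact hne huv
    · exact hne huv.symm
  have key (S : Finset (V × V)) : (∀ q ∈ S, IsMonoHorizontal G l p q.1 q.2) →
      ∃ c : Sym2 V → Fin 2,
        (∀ u v, G.degree u % 2 ≠ G.degree v % 2 → c s(u, v) = base s(u, v)) ∧
        ∀ q ∈ S, totalDeg G (parityColoring G ρ c) c (c s(q.1, q.2)) q.1 ≠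
          totalDeg G (parityColoring G ρ c) c (c s(q.1, q.2)) q.2 := by
    induction S using Finset.induction_on_min_value (fun q : V × V => l q.1) with
    | empty => exact fun _ => ⟨base, fun _ _ _ => rfl, by simp⟩
    | insert q S _ hmin ih =>
      intro hS
      obtain ⟨c, hc, hgood⟩ := ih fun q hq => hS q (Finset.mem_insert_of_mem hq)
      obtain ⟨a, b⟩ := q
      obtain ⟨hab, hl, hdeg, hdega, hdegb⟩ := hS (a, b) (Finset.mem_insert_self _ _)
      simp only at hab hl hdeg hdega hdegb hmin
      have hla : l a ≠ 0 := fun h0 => hab.ne (h.eq_of_zero a b h0 (hl ▸ h0))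
      have hpa := h.parent_level a hla
      have hpb := h.parent_level b (hl ▸ hla)
      by_cases hcut : ρ a % 2 = ρ b % 2
      · obtain ⟨c', hc', hgood'⟩ := exists_recoloring G ρ hab (h.adj_parent a hla)
          (h.adj_parent b (hl ▸ hla)) (by rintro h'; rw [← h'] at hpa; omega)
          (by rintro h'; rw [← h'] at hpb; omega) hdeg hcut c
        refine ⟨c', fun u v huv => ?_, fun q hq => ?_⟩
        · rw [← hc u v huv]
          apply hc' <;> intro he <;> rcases Sym2.eq_iff.1 he with ⟨rfl, rfl⟩ | ⟨rfl, rfl⟩ <;> omega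
        · obtain ⟨x, y⟩ := q
          obtain ⟨hxy, hlxy, -⟩ := hS (x, y) hq
          simp only at hxy hlxy ⊢
          by_cases hxa : x = a
          · subst hxa
            obtain rfl := h.eq_of_horizontal hG hab hl hxy hlxy
            exact hgood'
          by_cases hxb : x = b
          · subst hxb
            obtain rfl := h.eq_of_horizontal hG hab.symm hl.symm hxy hlxy
            rw [Sym2.eq_swap]
            exact hgood'.symm
          have hya : y ≠ a := by
            rintro rfl
            exact hxb (h.eq_of_horizontal hG hab hl hxy.symm hlxy.symm).symm
          have hyb : y ≠ b := by
            rintro rfl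
            exact hxa (h.eq_of_horizontal hG hab.symm hl.symm hxy.symm hlxy.symm).symm
          have hmem : (x, y) ∈ S := by
            rcases Finset.mem_insert.1 hq with hq | hq
            · exact absurd (congrArg Prod.fst hq) hxa
            · exact hq
          have hlx : l a ≤ l x := hmin _ hmem
          have hagree (z) (hza : z ≠ a) (hzb : z ≠ b) (hlz : l a ≤ l z) (u) :
              c' s(z, u) = c s(z, u) := by
            have hzpa : z ≠ p a := by rintro rfl; omega
            have hzpb : z ≠ p b := by rintro rfl; omega
            apply hc' <;> simp [hza, hzb, hzpa, hzpb]
          rw [hagree x hxa hxb hlx,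
            totalDeg_congr G ρ fun u _ => hagree x hxa hxb hlx u,
            totalDeg_congr G ρ fun u _ => hagree y hya hyb (hlxy ▸ hlx) u]
          exact hgood _ hmem
      · refine ⟨c, hc, fun q hq => ?_⟩
        rcases Finset.mem_insert.1 hq with rfl | hq
        · rcases (by omega : c s(a, b) = 0 ∨ c s(a, b) = 1) with h0 | h1
          · exact totalDeg_ne_of_zero G ρ h0 hcut
          · exact totalDeg_ne_of_one G ρ h1 (by simp only; omega)
        · exact hgood q hq
  obtain ⟨c, hc, hgood⟩ := key (univ.filter fun q => IsMonoHorizontal G l p q.1 q.2)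
    fun q hq => (Finset.mem_filter.1 hq).2
  refine ⟨parityColoring G ρ c, c, fun u v huv => ?_⟩
  by_cases hF : IsMonoHorizontal G l p u v
  · exact hgood (u, v) (Finset.mem_filter.2 ⟨Finset.mem_univ _, hF⟩)
  by_cases hdeg : G.degree u % 2 = G.degree v % 2
  · have hcut := hρ u v huv hdeg hF
    rcases (by omega : c s(u, v) = 0 ∨ c s(u, v) = 1) with h0 | h1
    · exact totalDeg_ne_of_zero G ρ h0 hcut
    · exact totalDeg_ne_of_one G ρ h1 (by omega)
  · by_cases hcut : ρ u % 2 = ρ v % 2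
    · exact totalDeg_ne_of_one G ρ ((hc u v hdeg).trans (hbase1 u v hcut)) (by omega)
    · exact totalDeg_ne_of_zero G ρ ((hc u v hdeg).trans (hbase0 u v hcut)) hcut
end

section
/- If G is a finite simple graph with maximum degree at most 3 (a subcubic graph), then G admits a locally irregular total coloring with 2 colors, i.e., tlir(G) ≤ 2. -/
open Finset
open scoped Classical

variable {V : Type*}

/-- The neighbors of `v` on the same side of the bipartition `p` as `v`. -/
noncomputable def sideNbrs [Fintype V] (H : SimpleGraph V) (p : V → ZMod 2) (v : V) : Finset V :=
  univ.filter fun w => H.Adj v w ∧ p w = p v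

/-- The neighbors of `v` across the bipartition `p`. -/
noncomputable def cutNbrs [Fintype V] (H : SimpleGraph V) (p : V → ZMod 2) (v : V) : Finset V :=
  univ.filter fun w => H.Adj v w ∧ p w ≠ p v

theorem ZMod.ne_iff_eq_add_one (a b : ZMod 2) : a ≠ b ↔ a = b + 1 := by
  revert a b; decide

theorem sum_sum_eq_two_mul_add [Fintype V] (g : V → V → ℕ) (hg : ∀ u w, g u w = g w u)
    (v : V) (hv : g v v = 0) :
    ∑ u, ∑ w, g u w =
      2 * ∑ w, g v w + ∑ u ∈ univ.erase v, ∑ w ∈ univ.erase v, g u w := by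
  have h (f : V → ℕ) : ∑ w, f w = f v + ∑ w ∈ univ.erase v, f w :=
    (Finset.add_sum_erase univ f (mem_univ v)).symm
  rw [h, sum_congr rfl fun u _ => h (g u), sum_add_distrib, h (g v), hv,
    sum_congr rfl fun u _ => hg u v]
  ring

theorem sum_sum_sideNbrs_eq [Fintype V] (H : SimpleGraph V) (p : V → ZMod 2) (v : V) :
    ∑ u, (sideNbrs H p u).card = 2 * (sideNbrs H p v).card +
      ∑ u ∈ univ.erase v, ∑ w ∈ univ.erase v, if H.Adj u w ∧ p w = p u then 1 else 0 := by
  simp only [sideNbrs, card_filter]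
  refine sum_sum_eq_two_mul_add _ (fun u w => ?_) v (by simp)
  simp only [H.adj_comm u w, eq_comm (a := p u)]

theorem sideNbrs_update_self [Fintype V] (H : SimpleGraph V) (p : V → ZMod 2) (v : V) :
    sideNbrs H (Function.update p v (p v + 1)) v = cutNbrs H p v := by
  ext w
  simp only [sideNbrs, cutNbrs, mem_filter, mem_univ, true_and]
  refine and_congr_right fun h => ?_
  rw [Function.update_of_ne h.ne', Function.update_self, ZMod.ne_iff_eq_add_one]

/-- Flipping `v` changes the number of monochromatic ordered pairs by twice the difference of
its cut degree and its side degree. -/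
theorem sum_sideNbrs_update [Fintype V] (H : SimpleGraph V) (p : V → ZMod 2) (v : V) :
    ∑ u, (sideNbrs H (Function.update p v (p v + 1)) u).card + 2 * (sideNbrs H p v).card =
      ∑ u, (sideNbrs H p u).card + 2 * (cutNbrs H p v).card := by
  have h : ∑ u ∈ univ.erase v, ∑ w ∈ univ.erase v,
      (if H.Adj u w ∧ Function.update p v (p v + 1) w = Function.update p v (p v + 1) u
        then 1 else 0) =
      ∑ u ∈ univ.erase v, ∑ w ∈ univ.erase v, if H.Adj u w ∧ p w = p u then 1 else 0 := by
    refine sum_congr rfl fun u hu => sum_congr rfl fun w hw => ?_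
    rw [Function.update_of_ne (ne_of_mem_erase hu), Function.update_of_ne (ne_of_mem_erase hw)]
  rw [sum_sum_sideNbrs_eq H _ v, sum_sum_sideNbrs_eq H p v, h, sideNbrs_update_self]
  ring

/-- A maximum cut: no vertex has more neighbors on its own side than across, and the cut neighbors
of a vertex for which the two numbers agree have at least two more neighbors across. -/
theorem exists_max_cut [Fintype V] (H : SimpleGraph V) :
    ∃ p : V → ZMod 2, (∀ v, (sideNbrs H p v).card ≤ (cutNbrs H p v).card) ∧
      ∀ v, (sideNbrs H p v).card = (cutNbrs H p v).card → ∀ u ∈ cutNbrs H p v,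
        (sideNbrs H p u).card + 2 ≤ (cutNbrs H p u).card := by
  obtain ⟨p, hp⟩ := Finite.exists_min fun p : V → ZMod 2 => ∑ u, (sideNbrs H p u).card
  have key : ∀ q : V → ZMod 2, ∑ u, (sideNbrs H q u).card = ∑ u, (sideNbrs H p u).card →
      ∀ v, (sideNbrs H q v).card ≤ (cutNbrs H q v).card := by
    intro q hq v
    have h1 := sum_sideNbrs_update H q v
    have h2 := hp (Function.update q v (q v + 1))
    omega
  refine ⟨p, key p rfl, fun v hv u hu => ?_⟩
  have h1 := key (Function.update p v (p v + 1)) (by have := sum_sideNbrs_update H p v; omega) u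
  simp only [cutNbrs, mem_filter, mem_univ, true_and] at hu
  obtain ⟨hvu, hpu⟩ := hu
  have hpu' := (ZMod.ne_iff_eq_add_one _ _).1 hpu
  have e1 : sideNbrs H (Function.update p v (p v + 1)) u = insert v (sideNbrs H p u) := by
    ext w
    simp only [sideNbrs, mem_filter, mem_univ, true_and, mem_insert,
      Function.update_of_ne hvu.ne']
    rcases eq_or_ne w v with rfl | hw
    · simp [hvu.symm, hpu']
    · simp [hw]
  have e2 : insert v (cutNbrs H (Function.update p v (p v + 1)) u) = cutNbrs H p u := by
    ext w
    simp only [cutNbrs, mem_filter, mem_univ, true_and, mem_insert,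
      Function.update_of_ne hvu.ne']
    rcases eq_or_ne w v with rfl | hw
    · simp [hvu.symm, hpu']
    · simp [hw]
  rw [e1, card_insert_of_notMem (by simp [sideNbrs, hpu.symm])] at h1
  rw [← e2, card_insert_of_notMem (by simp [cutNbrs, hpu', hvu.ne'])]
  omega

/-- Fredholm alternative for a parity system on the pairs of an involution `m`. -/
theorem exists_parity_solution [Fintype V] (m : V → V) (hm : Function.Involutive m)
    (F : V → V → Prop) [DecidableRel F] (hF : ∀ u w, F u w → F w u) (hF' : ∀ u, ¬ F u u)
    (b : V → ZMod 2) (hb : ∀ u, b (m u) = b u) (hb' : ∀ u, m u = u → b u = 0)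
    (hT : ∀ T : Finset V, (∀ u ∈ T, m u ∉ T) →
      (∀ u w, F u w → (u ∈ T ∨ m u ∈ T) → (w ∈ T ∨ m w ∈ T)) → ∑ u ∈ T, b u = 0) :
    ∃ z : V → V → ZMod 2, ∀ u, (∑ w, if F u w then z u w + z w u else 0) +
      (∑ w, if F (m u) w then z (m u) w + z w (m u) else 0) = b u := by
  let s : (V → V → ZMod 2) → V → ZMod 2 := fun z u => ∑ w, if F u w then z u w + z w u else 0
  let L : (V → V → ZMod 2) →ₗ[ZMod 2] (V → ZMod 2) :=
    { toFun := fun z u => s z u + s z (m u)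
      map_add' := by
        intro x y
        ext u
        have h (v : V) : s (x + y) v = s x v + s y v := by
          simp only [s, ← sum_add_distrib]
          refine sum_congr rfl fun w _ => ?_
          split_ifs
          · simp; ring
          · simp
        simp only [h, Pi.add_apply]
        ring
      map_smul' := by
        intro c x
        ext u
        have h (v : V) : s (c • x) v = c * s x v := by
          simp only [s, mul_sum]
          refine sum_congr rfl fun w _ => ?_
          split_ifs
          · simp; ring
          · simp
        simp only [h, Pi.smul_apply, smul_eq_mul, RingHom.id_apply]
        ring }
  suffices h : b ∈ LinearMap.range L by
    obtain ⟨z, hz⟩ := h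
    exact ⟨z, fun u => congrFun hz u⟩
  by_contra hnot
  obtain ⟨φ, hφb, hφ⟩ := Submodule.exists_le_ker_of_notMem hnot
  obtain ⟨l, hl⟩ : ∃ l : V → ZMod 2, ∀ f, φ f = ∑ u, l u * f u := by
    refine ⟨fun u => φ (Pi.single u 1), fun f => ?_⟩
    rw [LinearMap.pi_apply_eq_sum_univ φ f]
    refine sum_congr rfl fun u _ => ?_
    rw [smul_eq_mul, mul_comm]
    congr 2
    ext w
    simp [Pi.single_apply, eq_comm]
  have hmu (f : V → ZMod 2) : ∑ u, l u * (f u + f (m u)) = ∑ u, (l u + l (m u)) * f u := by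
    simp only [mul_add, add_mul, sum_add_distrib]
    congr 1
    rw [← Equiv.sum_comp (hm.toPerm m)]
    refine sum_congr rfl fun u _ => ?_
    simp [hm u]
  have hL (z : V → V → ZMod 2) : φ (L z) = ∑ u, (l u + l (m u)) * s z u :=
    (hl (L z)).trans (hmu (s z))
  have hclosed : ∀ u w, F u w → l u + l (m u) = l w + l (m w) := by
    intro u w huw
    have hne : u ≠ w := fun h => hF' u (by rwa [← h] at huw)
    have h0 : φ (L fun a c => if a = u ∧ c = w then 1 else 0) = 0 := hφ ⟨_, rfl⟩
    rw [hL] at h0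
    have hs (v : V) : s (fun a c => if a = u ∧ c = w then 1 else 0) v =
        (if v = u then 1 else 0) + (if v = w then 1 else 0) := by
      simp only [s]
      rcases eq_or_ne v u with rfl | hvu
      · rw [sum_eq_single w]
        · simp [huw, hne, hne.symm]
        · intro c _ hc; simp [hc, hne]
        · simp
      · rcases eq_or_ne v w with rfl | hvw
        · rw [sum_eq_single u]
          · simp [hF _ _ huw, hne, hne.symm]
          · intro c _ hc; simp [hc, hvu]
          · simp
        · simp [hvu, hvw]
    simp only [hs, mul_add, sum_add_distrib, mul_ite, mul_one, mul_zero, sum_ite_eq',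
      mem_univ, if_true] at h0
    exact CharTwo.add_eq_zero.1 h0
  have hTl := hT (univ.filter fun u => l u = 1 ∧ l (m u) = 0) (by simp +contextual [hm _]) (by
    intro u w huw
    have h := hclosed u w huw
    have hdec : ∀ a b c d : ZMod 2, a + b = c + d →
        (a = 1 ∧ b = 0 ∨ b = 1 ∧ a = 0) → (c = 1 ∧ d = 0 ∨ d = 1 ∧ c = 0) := by decide
    simpa only [mem_filter, mem_univ, true_and, hm _] using hdec _ _ _ _ h)
  apply hφb
  rw [hl]
  have hsplit (u : V) : l u * b u = (if l u = 1 ∧ l (m u) = 0 then b u else 0) +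
      (if l u = 1 ∧ l (m u) = 1 then b u else 0) := by
    generalize l u = a, l (m u) = c, b u = d
    revert a c d
    decide
  rw [sum_congr rfl fun u _ => hsplit u, sum_add_distrib, ← sum_filter, hTl, zero_add]
  refine sum_involution (fun u _ => m u) ?_ ?_ (by simp) (fun u _ => hm u)
  · intro u _
    simp only [hm u, hb u, and_comm (a := l (m u) = 1)]
    exact CharTwo.add_self_eq_zero _
  · intro u _ h hmu
    rw [hb' u hmu] at h
    simp at h

/-- The partner of `v`: its neighbor on its own side of `p`, or `v` if there is none. -/
noncomputable def partner [Fintype V] (H : SimpleGraph V) (p : V → ZMod 2) (v : V) : V :=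
  if h : (sideNbrs H p v).Nonempty then h.choose else v

section Partner

variable [Fintype V] {H : SimpleGraph V} {p : V → ZMod 2}

theorem partner_spec {v : V} (h : (sideNbrs H p v).Nonempty) :
    partner H p v ∈ sideNbrs H p v := by
  rw [partner, dif_pos h]
  exact h.choose_spec

theorem mem_sideNbrs {v w : V} : w ∈ sideNbrs H p v ↔ H.Adj v w ∧ p w = p v := by
  simp [sideNbrs]

theorem mem_cutNbrs {v w : V} : w ∈ cutNbrs H p v ↔ H.Adj v w ∧ p w ≠ p v := by
  simp [cutNbrs]

theorem partner_mem {v : V} (h : partner H p v ≠ v) : partner H p v ∈ sideNbrs H p v :=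
  partner_spec (by by_contra hn; exact h (by rw [partner, dif_neg hn]))

theorem partner_ne_iff {v : V} : partner H p v ≠ v ↔ (sideNbrs H p v).Nonempty :=
  ⟨fun h => ⟨_, partner_mem h⟩, fun h => (mem_sideNbrs.1 (partner_spec h)).1.ne'⟩

theorem p_partner (v : V) : p (partner H p v) = p v := by
  by_cases h : partner H p v = v
  · rw [h]
  · exact (mem_sideNbrs.1 (partner_mem h)).2

theorem eq_partner (hs : ∀ v, (sideNbrs H p v).card ≤ 1) {v w : V}
    (h : w ∈ sideNbrs H p v) : w = partner H p v :=
  card_le_one.1 (hs v) _ h _ (partner_spec ⟨w, h⟩)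

theorem partner_involutive (hs : ∀ v, (sideNbrs H p v).card ≤ 1) :
    Function.Involutive (partner H p) := by
  intro v
  by_cases h : partner H p v = v
  · rw [h, h]
  · have h1 := mem_sideNbrs.1 (partner_mem h)
    exact (eq_partner hs (mem_sideNbrs.2 ⟨h1.1.symm, h1.2.symm⟩)).symm

/-- A set of pairs of partners all of whose members have two cut neighbors, all of them inside
the set, consists of an even number of pairs. -/
theorem even_card_of_closed (hs : ∀ v, (sideNbrs H p v).card ≤ 1) (T : Finset V)
    (hT : ∀ u ∈ T, partner H p u ∉ T)
    (hcl : ∀ u, (u ∈ T ∨ partner H p u ∈ T) → (cutNbrs H p u).card = 2 ∧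
      ∀ w ∈ cutNbrs H p u, w ∈ T ∨ partner H p w ∈ T) : Even T.card := by
  have hm := partner_involutive hs
  let S : ZMod 2 → Finset V := fun i =>
    univ.filter fun u => p u = i ∧ (u ∈ T ∨ partner H p u ∈ T)
  have hS (i : ZMod 2) : (S i).card = 2 * (T.filter fun u => p u = i).card := by
    have h : S i = (T.filter fun u => p u = i) ∪
        (T.filter fun u => p u = i).image (partner H p) := by
      ext u
      simp only [S, mem_filter, mem_univ, true_and, mem_union, mem_image]
      constructor
      · rintro ⟨rfl, h | h⟩
        · exact Or.inl ⟨h, rfl⟩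
        · exact Or.inr ⟨_, ⟨h, p_partner u⟩, hm u⟩
      · rintro (⟨h, rfl⟩ | ⟨a, ⟨ha, rfl⟩, rfl⟩)
        · exact ⟨rfl, Or.inl h⟩
        · exact ⟨p_partner a, Or.inr (by rwa [hm a])⟩
    rw [h, card_union_of_disjoint, card_image_of_injective _ hm.injective, two_mul]
    rw [disjoint_left]
    intro u hu hu'
    obtain ⟨a, ha, rfl⟩ := mem_image.1 hu'
    exact hT a (mem_filter.1 ha).1 (mem_filter.1 hu).1
  have hcount : (S 0).card * 2 = (S 1).card * 2 := by
    have hnbr (i j : ZMod 2) (hij : i = j + 1) (u : V) (hu : u ∈ S i) :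
        (S j).filter (fun w => H.Adj u w) = cutNbrs H p u := by
      simp only [S, mem_filter, mem_univ, true_and] at hu
      ext w
      simp only [S, mem_filter, mem_univ, true_and, mem_cutNbrs]
      constructor
      · rintro ⟨⟨hw, -⟩, h⟩
        refine ⟨h, ?_⟩
        rw [hw, hu.1, hij]
        simp
      · rintro ⟨h, hw⟩
        refine ⟨⟨?_, (hcl u hu.2).2 w (mem_cutNbrs.2 ⟨h, hw⟩)⟩, h⟩
        rw [ZMod.ne_iff_eq_add_one, hu.1, hij, add_assoc, CharTwo.add_self_eq_zero, add_zero] at hw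
        exact hw
    refine card_mul_eq_card_mul (fun u w => H.Adj u w) (fun u hu => ?_) (fun u hu => ?_)
    · rw [bipartiteAbove, hnbr 0 1 (by decide) u hu]
      exact (hcl u (mem_filter.1 hu).2.2).1
    · simp only [bipartiteBelow, H.adj_comm _ u]
      rw [hnbr 1 0 (by decide) u hu]
      exact (hcl u (mem_filter.1 hu).2.2).1
  have hTsplit : T.card = (T.filter fun u => p u = 0).card + (T.filter fun u => p u = 1).card := by
    rw [← card_filter_add_card_filter_not (s := T) (fun u => p u = 0)]
    congr 2
    ext u
    have h : ∀ a : ZMod 2, ¬ a = 0 ↔ a = 1 := by decide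
    simp [h]
  rw [hS, hS] at hcount
  exact ⟨(T.filter fun u => p u = 0).card, by omega⟩

end Partner

/-- Colors for all edges not joining partners: edges outside `H` receive the forced color
`p u + p w`, and any two partners see a different parity of edges of color `1`. -/
theorem exists_cross_coloring [Fintype V] {G H : SimpleGraph V} {p : V → ZMod 2} (hHG : H ≤ G)
    (hG : ∀ v, (univ.filter fun w => G.Adj v w).card ≤ 3)
    (h1 : ∀ v, (sideNbrs H p v).card ≤ (cutNbrs H p v).card)
    (h2 : ∀ v, (sideNbrs H p v).card = (cutNbrs H p v).card → ∀ u ∈ cutNbrs H p v,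
        (sideNbrs H p u).card + 2 ≤ (cutNbrs H p u).card)
    (hs : ∀ v, (sideNbrs H p v).card ≤ 1) :
    ∃ y : V → V → ZMod 2, (∀ u w, y u w = y w u) ∧ (∀ u w, y u w = 1 → G.Adj u w) ∧
      (∀ u w, w ∈ sideNbrs H p u → y u w = 0) ∧
      (∀ u w, G.Adj u w → ¬ H.Adj u w → y u w = p u + p w) ∧
      ∀ u, partner H p u ≠ u → ∑ w, y u w + ∑ w, y (partner H p u) w = 1 := by
  let e : V → V → ZMod 2 := fun u w => if G.Adj u w ∧ ¬ H.Adj u w then p u + p w else 0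
  have hm := partner_involutive hs
  have hadd (v : V) : (sideNbrs H p v).card + (cutNbrs H p v).card =
      (univ.filter fun w => H.Adj v w).card := by
    rw [← card_filter_add_card_filter_not (s := univ.filter fun w => H.Adj v w)
      (fun w => p w = p v), filter_filter, filter_filter]
    rfl
  have hle (v : V) : (univ.filter fun w => H.Adj v w) ⊆ univ.filter fun w => G.Adj v w :=
    fun w hw => by
      simp only [mem_filter, mem_univ, true_and] at hw ⊢
      exact hHG hw
  obtain ⟨z, hz⟩ := exists_parity_solution (partner H p) hm (fun u w => w ∈ cutNbrs H p u)
    (fun u w h => by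
      rw [mem_cutNbrs] at h ⊢
      exact ⟨h.1.symm, h.2.symm⟩)
    (fun u h => (mem_cutNbrs.1 h).2 rfl)
    (fun u => ∑ w, e u w + ∑ w, e (partner H p u) w + if partner H p u = u then 0 else 1)
    (fun u => by
      simp only [hm u]
      rw [add_comm (∑ w, e u w)]
      simp only [eq_comm (a := u)])
    (fun u h => by simp only [h, if_true, add_zero]; exact CharTwo.add_self_eq_zero _)
    (fun T hT hcl => by
      have hside (u : V) (hu : u ∈ T ∨ partner H p u ∈ T) : (sideNbrs H p u).card = 1 := by
        refine le_antisymm (hs u) (card_pos.2 (partner_ne_iff.1 fun h => ?_))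
        rw [h, or_self] at hu
        exact hT u hu (by rwa [h])
      have hcut (u : V) (hu : u ∈ T ∨ partner H p u ∈ T) : (cutNbrs H p u).card = 2 := by
        have a1 := hside u hu
        have a2 := hadd u
        have a3 := card_le_card (hle u)
        have a4 := hG u
        have a5 := h1 u
        by_contra hne
        obtain ⟨w, hw⟩ : (cutNbrs H p u).Nonempty := card_pos.1 (by omega)
        have a6 := h2 u (by omega) w hw
        have a7 := hside w (hcl u w hw hu)
        have a8 := hadd w
        have a9 := card_le_card (hle w)
        have a10 := hG w
        omega
      have he (u : V) (hu : u ∈ T ∨ partner H p u ∈ T) : ∑ w, e u w = 0 := by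
        have heq := eq_of_subset_of_card_le (hle u) (by
          rw [← hadd u, hside u hu, hcut u hu]
          exact hG u)
        refine sum_eq_zero fun w _ => if_neg ?_
        rintro ⟨hw, hw'⟩
        have : w ∈ univ.filter fun w => H.Adj u w := by
          rw [heq]
          simpa using hw
        exact hw' (by simpa using this)
      have hone (u : V) (hu : u ∈ T) :
          (∑ w, e u w + ∑ w, e (partner H p u) w + if partner H p u = u then 0 else 1) =
            (1 : ZMod 2) := by
        rw [he u (Or.inl hu), he _ (Or.inr (by rwa [hm u])), if_neg, zero_add, zero_add]
        intro h
        exact hT u hu (by rwa [h])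
      rw [sum_congr rfl hone, sum_const, nsmul_one]
      exact (ZMod.natCast_eq_zero_iff_even).2
        (even_card_of_closed hs T hT fun u hu => ⟨hcut u hu, fun w hw => hcl u w hw hu⟩))
  refine ⟨fun u w => (if w ∈ cutNbrs H p u then z u w + z w u else 0) + e u w,
    fun u w => ?_, fun u w h => ?_, fun u w h => ?_, fun u w h h' => ?_, fun u h => ?_⟩
  · simp only [e, mem_cutNbrs, H.adj_comm u w, G.adj_comm u w, ne_comm (a := p u),
      add_comm (z u w), add_comm (p u)]
  · by_contra hn
    have hn' : ¬ H.Adj u w := fun h => hn (hHG h)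
    simp [e, mem_cutNbrs, hn, hn'] at h
  · rw [mem_sideNbrs] at h
    simp [e, mem_cutNbrs, h.1, h.2]
  · simp [e, mem_cutNbrs, h, h']
  · have := hz u
    rw [if_neg h] at this
    simp only [sum_add_distrib]
    rw [add_add_add_comm, this, add_right_comm, CharTwo.add_self_eq_zero, zero_add]

theorem totalDeg_zero_add_totalDeg_one [Fintype V] (G : SimpleGraph V) (cV : V → Fin 2)
    (cE : Sym2 V → Fin 2) (v : V) :
    totalDeg G cV cE 0 v + totalDeg G cV cE 1 v = (univ.filter fun w => G.Adj v w).card + 1 := by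
  rw [← card_filter_add_card_filter_not (s := univ.filter fun w => G.Adj v w)
    (fun w => cE s(v, w) = 0), filter_filter, filter_filter]
  have h : ∀ a : Fin 2, ¬ a = 0 ↔ a = 1 := by decide
  have h' : ((if cV v = 0 then 1 else 0) + if cV v = 1 then 1 else 0) = 1 := by
    generalize cV v = a
    revert a
    decide
  simp only [totalDeg, h]
  omega

theorem hasTLIR_two_of_card_le [Fintype V] (G : SimpleGraph V)
    (hG : ∀ v, (univ.filter fun w => G.Adj v w).card ≤ 3) : HasTLIR G 2 := by
  let d : V → ℕ := fun v => (univ.filter fun w => G.Adj v w).card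
  let H : SimpleGraph V :=
    { Adj := fun u w => G.Adj u w ∧ (Even (d u) ↔ Even (d w))
      symm := ⟨fun u w h => ⟨h.1.symm, h.2.symm⟩⟩
      loopless := ⟨fun u h => G.loopless.irrefl u h.1⟩ }
  have hHG : H ≤ G := fun u w h => h.1
  obtain ⟨p, h1, h2⟩ := exists_max_cut H
  have hadd (v : V) : (sideNbrs H p v).card + (cutNbrs H p v).card ≤ d v := by
    rw [← card_union_of_disjoint]
    · refine card_le_card fun w hw => ?_
      rw [mem_union, mem_sideNbrs, mem_cutNbrs] at hw
      simpa using hw.elim (fun h => hHG h.1) (fun h => hHG h.1)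
    · rw [disjoint_left]
      exact fun w hw hw' => (mem_cutNbrs.1 hw').2 (mem_sideNbrs.1 hw).2
  have hs (v : V) : (sideNbrs H p v).card ≤ 1 := by
    have := hadd v
    have := h1 v
    have : d v ≤ 3 := hG v
    omega
  obtain ⟨y, hysymm, hyG, hyside, hymix, hyodd⟩ := exists_cross_coloring hHG hG h1 h2 hs
  have hm := partner_involutive hs
  have hpm (v : V) : p (partner H p v) = p v := p_partner v
  have hmH {v : V} : partner H p v ≠ v → partner H p v ∈ sideNbrs H p v := partner_mem
  have hmS {v : V} : partner H p v ≠ v → (sideNbrs H p v).Nonempty := partner_ne_iff.1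
  have hmU {v w : V} : w ∈ sideNbrs H p v → w = partner H p v := eq_partner hs
  generalize partner H p = m at hm hpm hmH hmS hmU hyodd
  let x : V → ℕ := fun v => (univ.filter fun w => y v w = 1).card
  have hx (v : V) : (x v : ZMod 2) = ∑ w, y v w := by
    rw [natCast_card_filter]
    refine sum_congr rfl fun w _ => ?_
    generalize y v w = a
    revert a
    decide
  obtain ⟨rule, hruledef⟩ : ∃ rule : V → Prop,
      ∀ v, rule v ↔ (p v = 0 ↔ (x v = 2 ∨ x (m v) = 2)) := ⟨_, fun _ => Iff.rfl⟩
  have hrule (v : V) : rule (m v) ↔ rule v := by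
    rw [hruledef, hruledef, hm v, hpm, or_comm]
  let col : V → V → Fin 2 := fun u w =>
    if w = m u then (if rule u then 1 else 0) else if y u w = 1 then 1 else 0
  have hcol (u w : V) : col u w = col w u := by
    by_cases h : w = m u
    · have h' : u = m w := by rw [h, hm u]
      simp only [col, if_pos h, if_pos h']
      rw [h]
      simp only [hrule]
    · have h' : ¬ u = m w := fun h' => h (by rw [h', hm w])
      simp only [col, if_neg h, if_neg h', hysymm u w]
  let cE : Sym2 V → Fin 2 := Sym2.lift ⟨col, hcol⟩
  have hcE (u w : V) : cE s(u, w) = col u w := rfl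
  let red : V → ℕ := fun v => (univ.filter fun w => G.Adj v w ∧ cE s(v, w) = 1).card
  let cV : V → Fin 2 := fun v => if (red v : ZMod 2) = p v then 0 else 1
  have htot (v : V) : totalDeg G cV cE 1 v = red v + if cV v = 1 then 1 else 0 := rfl
  have hpar (v : V) : totalDeg G cV cE 1 v % 2 = (p v).val := by
    rw [← ZMod.val_natCast, htot]
    congr 1
    push_cast
    by_cases h : (red v : ZMod 2) = p v
    · simp [cV, h]
    · simpa [cV, h] using ((ZMod.ne_iff_eq_add_one _ _).1 (Ne.symm h)).symm
  have hmem {v : V} (hv : m v ≠ v) : H.Adj v (m v) := (mem_sideNbrs.1 (hmH hv)).1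
  have hym {v : V} (hv : m v ≠ v) : y v (m v) = 0 := hyside _ _ (hmH hv)
  have hred (v : V) (hv : m v ≠ v) : red v = x v + if rule v then 1 else 0 := by
    have hnot : m v ∉ univ.filter fun w => y v w = 1 := by simp [hym hv]
    split_ifs with hr
    · rw [← card_insert_of_notMem hnot]
      refine congrArg card ?_
      ext w
      simp only [mem_filter, mem_univ, true_and, mem_insert, hcE, col]
      by_cases hw : w = m v
      · simp [hw, hr, hHG (hmem hv)]
      · simpa [hw] using hyG v w
    · refine congrArg card ?_
      ext w
      simp only [mem_filter, mem_univ, true_and, hcE, col]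
      by_cases hw : w = m v
      · simp [hw, hr, hym hv]
      · simpa [hw] using hyG v w
  have hxle (v : V) (hv : m v ≠ v) : x v ≤ 2 := by
    have h : insert (m v) (univ.filter fun w => y v w = 1) ⊆
        univ.filter fun w => G.Adj v w := by
      intro w hw
      rw [mem_insert] at hw
      rcases hw with rfl | hw
      · simpa using hHG (hmem hv)
      · simpa using hyG v w (by simpa using hw)
    have h' := card_le_card h
    rw [card_insert_of_notMem (by simp [hym hv])] at h'
    have := hG v
    change x v + 1 ≤ _ at h'
    omega
  have hdge (v : V) (hv : m v ≠ v) : 2 ≤ d v := by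
    have := card_pos.2 (hmS hv)
    have := h1 v
    have := hadd v
    omega
  have hpartner (v : V) (hv : m v ≠ v) :
      d v = d (m v) ∧ totalDeg G cV cE 1 v ≠ totalDeg G cV cE 1 (m v) := by
    have hv' : m (m v) ≠ m v := by rw [hm v]; exact hv.symm
    constructor
    · have a1 := hdge v hv
      have a2 := hdge _ hv'
      have a3 : d v ≤ 3 := hG v
      have a4 : d (m v) ≤ 3 := hG (m v)
      have a5 := (hmem hv).2
      rw [Nat.even_iff, Nat.even_iff] at a5
      omega
    · have a1 := hpar v
      have a2 := hpar (m v)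
      have a3 := hxle v hv
      have a4 := hxle _ hv'
      have a5 : (x v + x (m v)) % 2 = 1 := by
        have := hyodd v hv
        rw [← hx, ← hx, ← Nat.cast_add, ← Nat.cast_one, ZMod.natCast_eq_natCast_iff] at this
        exact this
      rw [htot, hred _ hv] at a1 ⊢
      rw [htot, hred _ hv', hpm] at a2
      rw [htot, hred _ hv']
      have hr := hrule v
      have a6 : rule v ↔ ((p v).val = 0 ↔ (x v = 2 ∨ x (m v) = 2)) := by
        rw [hruledef, ZMod.val_eq_zero]
      split_ifs at * <;> grind
  have hsum := totalDeg_zero_add_totalDeg_one G cV cE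
  have hcases : ∀ a : Fin 2, a = 0 ∨ a = 1 := by decide
  have hval : ∀ a b : ZMod 2, a ≠ b → a.val ≠ b.val := fun a b h h' => h (ZMod.val_injective 2 h')
  refine ⟨cV, cE, fun u v huv => ?_⟩
  have su : _ = d u + 1 := hsum u
  have sv : _ = d v + 1 := hsum v
  have pu := hpar u
  have pv := hpar v
  by_cases hv : v = m u
  · obtain ⟨a1, a2⟩ := hpartner u (hv ▸ huv.ne')
    rw [← hv] at a1 a2
    rcases hcases (cE s(u, v)) with h | h <;> rw [h] <;> omega
  · by_cases hH : H.Adj u v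
    · have hp := hval _ _ fun h : p v = p u => hv (hmU (mem_sideNbrs.2 ⟨hH, h⟩))
      have hd := hH.2
      rw [Nat.even_iff, Nat.even_iff] at hd
      rcases hcases (cE s(u, v)) with h | h <;> rw [h] <;> omega
    · have hd : ¬ (Even (d u) ↔ Even (d v)) := fun h => hH ⟨huv, h⟩
      rw [Nat.even_iff, Nat.even_iff] at hd
      have hy := hymix u v huv hH
      have hc : cE s(u, v) = if p u = p v then 0 else 1 := by
        rw [hcE]
        simp only [col, if_neg hv, hy]
        generalize p u = a, p v = b
        revert a b
        decide
      split_ifs at hc with hp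
      · rw [hp] at pu
        rw [hc]
        omega
      · have := hval _ _ hp
        rw [hc]
        omega

/-- Every finite subcubic graph (every vertex has degree at most 3)
admits a locally irregular total coloring with 2 colors, i.e. `tlir(G) ≤ 2`. -/
theorem stmt4 {V : Type*} [Fintype V] (G : SimpleGraph V) [DecidableRel G.Adj]
    (hsub : ∀ v, G.degree v ≤ 3) : HasTLIR G 2 := by
  refine hasTLIR_two_of_card_le G fun v => ?_
  refine le_trans (le_of_eq ?_) (hsub v)
  rw [← G.card_neighborFinset_eq_degree]
  congr 1
  ext w
  simp
end

section
/- If G is a finite simple graph with maximum degree exactly 5, then G admits a locally irregular total coloring with 7 colors, i.e., tlir(G) ≤ 7. -/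
open Finset
open scoped Classical

variable {V : Type*}

/-- A finite graph all of whose nonempty vertex sets contain a vertex with fewer than `k`
neighbours in the set is `k`-colorable. -/
theorem SimpleGraph.colorable_of_forall_exists_card_lt [Fintype V] (H : SimpleGraph V) (k : ℕ)
    (hH : ∀ S : Finset V, S.Nonempty → ∃ v ∈ S, (S.filter fun u => H.Adj v u).card < k) :
    H.Colorable k := by
  suffices h : ∀ S : Finset V, ∃ c : V → ℕ, (∀ v ∈ S, c v < k) ∧
      ∀ u ∈ S, ∀ v ∈ S, H.Adj u v → c u ≠ c v by
    obtain ⟨c, hc, hp⟩ := h univ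
    exact ⟨SimpleGraph.Coloring.mk (fun v => ⟨c v, hc v (mem_univ v)⟩) fun {u v} huv h =>
      hp u (mem_univ u) v (mem_univ v) huv (congrArg Fin.val h)⟩
  intro S
  induction S using Finset.strongInduction with
  | H S ih =>
    rcases S.eq_empty_or_nonempty with rfl | hS
    · exact ⟨fun _ => 0, by simp, by simp⟩
    obtain ⟨v, hv, hlt⟩ := hH S hS
    obtain ⟨c, hc, hp⟩ := ih (S.erase v) (erase_ssubset hv)
    obtain ⟨a, ha, hna⟩ : ∃ a ∈ range k, a ∉ (S.filter fun u => H.Adj v u).image c := by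
      refine exists_mem_notMem_of_card_lt_card ?_
      rw [card_range]
      exact card_image_le.trans_lt hlt
    have hav : ∀ u ∈ S, H.Adj v u → c u ≠ a := fun u hu huv h =>
      hna (mem_image.2 ⟨u, mem_filter.2 ⟨hu, huv⟩, h⟩)
    refine ⟨Function.update c v a, fun u hu => ?_, fun u hu w hw huw => ?_⟩
    · by_cases h : u = v
      · subst h
        simpa using ha
      · rw [Function.update_of_ne h]
        exact hc u (mem_erase.2 ⟨h, hu⟩)
    · by_cases h : u = v
      · subst h
        rw [Function.update_self, Function.update_of_ne huw.ne']
        exact (hav w hw huw).symm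
      · by_cases h' : w = v
        · subst h'
          rw [Function.update_self, Function.update_of_ne h]
          exact hav u hu huw.symm
        · rw [Function.update_of_ne h, Function.update_of_ne h']
          exact hp u (mem_erase.2 ⟨h, hu⟩) w (mem_erase.2 ⟨h', hw⟩) huw

/-- `A` is an orientation of `G`: it contains exactly one of the two arcs on each edge. -/
structure IsOrientation (G : SimpleGraph V) (A : V → V → Prop) : Prop where
  adj : ∀ {u v}, A u v → G.Adj u v
  total : ∀ {u v}, G.Adj u v → A u v ∨ A v u
  asymm : ∀ {u v}, A u v → ¬ A v u

/-- A finite graph with maximum degree at most `2 * d` has an orientation with all indegrees at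
most `d`. -/
theorem exists_isOrientation_indegree_le [Fintype V] (G : SimpleGraph V) (d : ℕ)
    (hG : ∀ v, (univ.filter fun u => G.Adj v u).card ≤ 2 * d) :
    ∃ A : V → V → Prop, IsOrientation G A ∧ ∀ v, (univ.filter fun u => A u v).card ≤ d := by
  rcases Nat.eq_zero_or_pos d with rfl | hd
  · have hempty : ∀ u v, ¬ G.Adj u v := fun u v huv => by
      have h : (univ.filter fun w => G.Adj u w).card = 0 := Nat.le_zero.1 (hG u)
      exact filter_eq_empty_iff.1 (card_eq_zero.1 h) (mem_univ v) huv
    exact ⟨fun _ _ => False, ⟨False.elim, fun h => (hempty _ _ h).elim, fun h => h.elim⟩, by simp⟩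
  let t : G.edgeSet → Finset (V × Fin d) := fun e => univ.filter fun p => p.1 ∈ (e : Sym2 V)
  obtain ⟨f, hf, hft⟩ := (all_card_le_biUnion_card_iff_exists_injective t).1 fun F => by
    refine Nat.le_of_mul_le_mul_right
      (card_mul_le_card_mul (fun (e : G.edgeSet) (p : V × Fin d) => p.1 ∈ (e : Sym2 V))
        (m := 2 * d) (n := 2 * d) ?_ ?_) (by omega)
    · rintro ⟨e, he⟩ heF
      induction e using Sym2.ind with
      | _ x y =>
        have hxy : x ≠ y := G.ne_of_adj he
        have hsub : (({x, y} : Finset V) ×ˢ (univ : Finset (Fin d))) ⊆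
            bipartiteAbove (fun (e : G.edgeSet) (p : V × Fin d) => p.1 ∈ (e : Sym2 V))
              (F.biUnion t) ⟨s(x, y), he⟩ := by
          rintro ⟨p, i⟩ hp
          have hp' : p ∈ s(x, y) := by simpa using hp
          exact mem_filter.2 ⟨mem_biUnion.2 ⟨_, heF, mem_filter.2 ⟨mem_univ _, hp'⟩⟩, hp'⟩
        simpa [card_pair hxy] using card_le_card hsub
    · rintro ⟨v, i⟩ -
      refine le_trans (card_le_card_of_injOn
        (fun e : G.edgeSet => if h : v ∈ (e : Sym2 V) then Sym2.Mem.other h else v) ?_ ?_) (hG v)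
      · intro e he
        have hv : v ∈ (e : Sym2 V) := (mem_filter.1 he).2
        have h : G.Adj v (Sym2.Mem.other hv) := by
          rw [← SimpleGraph.mem_edgeSet, Sym2.other_spec hv]
          exact e.2
        simpa [hv] using h
      · intro e he e' he' heq
        have hv : v ∈ (e : Sym2 V) := (mem_filter.1 he).2
        have hv' : v ∈ (e' : Sym2 V) := (mem_filter.1 he').2
        simp only [hv, hv', dif_pos] at heq
        exact Subtype.ext (by rw [← Sym2.other_spec hv, ← Sym2.other_spec hv', heq])
  have hmem : ∀ {u v} (h : G.Adj u v), (f ⟨s(u, v), h⟩).1 = u ∨ (f ⟨s(u, v), h⟩).1 = v :=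
    fun {u v} h => by simpa [t] using hft ⟨s(u, v), h⟩
  have hswap : ∀ {u v} (h : G.Adj u v), f ⟨s(v, u), h.symm⟩ = f ⟨s(u, v), h⟩ :=
    fun h => congrArg f (Subtype.ext Sym2.eq_swap)
  refine ⟨fun u v => ∃ h : G.Adj u v, (f ⟨s(u, v), h⟩).1 = v,
    ⟨fun h => h.1, fun {u v} h => ?_, ?_⟩, fun v => ?_⟩
  · rcases hmem h with h' | h'
    · exact Or.inr ⟨h.symm, by rw [hswap h, h']⟩
    · exact Or.inl ⟨h, h'⟩
  · rintro u v ⟨h, h1⟩ ⟨_, h2⟩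
    rw [hswap h, h1] at h2
    exact h.ne h2.symm
  · have hcard := card_le_card_of_injOn (s := univ.filter fun u => ∃ h : G.Adj u v,
        (f ⟨s(u, v), h⟩).1 = v) (t := (univ : Finset (Fin d)))
      (fun u => if h : G.Adj u v then (f ⟨s(u, v), h⟩).2 else ⟨0, hd⟩) (by simp) ?_
    · simpa using hcard
    · intro u hu w hw huw
      obtain ⟨hu, hu'⟩ := (mem_filter.1 hu).2
      obtain ⟨hw, hw'⟩ := (mem_filter.1 hw).2
      simp only [hu, hw, dif_pos] at huw
      exact Sym2.congr_left.1 (congrArg Subtype.val (hf (Prod.ext (hu'.trans hw'.symm) huw)))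

/-- Give each edge the color of its tail. The result is locally irregular if the vertex coloring
is proper and no vertex `u` has exactly `outdeg v + 1` in-neighbours of color `c v`, for an
in-neighbour `v` of `u`. -/
theorem IsOrientation.hasTLIR [Fintype V] {G : SimpleGraph V} {A : V → V → Prop}
    (hA : IsOrientation G A) {k : ℕ} [NeZero k] (c : V → Fin k)
    (hc : ∀ u v, G.Adj u v → c u ≠ c v)
    (hne : ∀ v u, A v u → (univ.filter fun w => A w u ∧ c w = c v).card ≠
      (univ.filter fun w => A v w).card + 1) : HasTLIR G k := by
  let cE : Sym2 V → Fin k := fun e =>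
    if h : ∃ p : V × V, e = s(p.1, p.2) ∧ A p.1 p.2 then c h.choose.1 else 0
  have hcE : ∀ {u v}, A u v → cE s(u, v) = c u := fun {u v} huv => by
    have h : ∃ p : V × V, s(u, v) = s(p.1, p.2) ∧ A p.1 p.2 := ⟨(u, v), rfl, huv⟩
    have hval : cE s(u, v) = c h.choose.1 := dif_pos h
    obtain ⟨heq, harc⟩ := h.choose_spec
    rcases Sym2.eq_iff.1 heq with ⟨h1, -⟩ | ⟨h1, h2⟩
    · rw [hval, ← h1]
    · rw [← h1, ← h2] at harc
      exact (hA.asymm huv harc).elim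
  have hcE' : ∀ {u v}, A u v → cE s(v, u) = c u := fun h => by rw [Sym2.eq_swap, hcE h]
  have key : ∀ v u, A v u →
      totalDeg G c cE (cE s(v, u)) u ≠ totalDeg G c cE (cE s(v, u)) v := by
    intro v u hvu
    have hv : (univ.filter fun w => G.Adj v w ∧ cE s(v, w) = c v) =
        univ.filter fun w => A v w := by
      refine filter_congr fun w _ => ⟨fun ⟨hw, hw'⟩ => ?_, fun hw => ⟨hA.adj hw, hcE hw⟩⟩
      refine (hA.total hw).resolve_right fun h => ?_
      rw [hcE' h] at hw'
      exact hc _ _ hw hw'.symm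
    have hu : (univ.filter fun w => G.Adj u w ∧ cE s(u, w) = c v) =
        univ.filter fun w => A w u ∧ c w = c v := by
      refine filter_congr fun w _ => ⟨fun ⟨hw, hw'⟩ => ?_, fun ⟨hw, hw'⟩ =>
        ⟨(hA.adj hw).symm, (hcE' hw).trans hw'⟩⟩
      rcases hA.total hw with h | h
      · rw [hcE h] at hw'
        exact (hc _ _ (hA.adj hvu) hw'.symm).elim
      · exact ⟨h, (hcE' h).symm.trans hw'⟩
    rw [hcE hvu, totalDeg, totalDeg, hv, hu, if_pos rfl, if_neg (hc _ _ (hA.adj hvu)).symm]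
    exact hne v u hvu
  refine ⟨c, cE, fun u v huv => ?_⟩
  rcases hA.total huv with h | h
  · exact (key u v h).symm
  · rw [Sym2.eq_swap]
    exact key v u h

/-- For a graph with maximum degree at most 4 and a digraph `A` on the same vertices in which all
indegrees are at most 2, the graph has a proper 6-coloring such that the `A`-in-neighbours of a
vertex have distinct colors whenever one of them has outdegree at most 1. -/
theorem exists_coloring_inNeighbors_ne [Fintype V] {G : SimpleGraph V} {A : V → V → Prop}
    (hG : ∀ v, (univ.filter fun u => G.Adj v u).card ≤ 4)
    (hin : ∀ v, (univ.filter fun u => A u v).card ≤ 2) :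
    ∃ c : V → Fin 6, (∀ u v, G.Adj u v → c u ≠ c v) ∧
      ∀ u v w, u ≠ v → A u w → A v w → (univ.filter fun x => A u x).card ≤ 1 → c u ≠ c v := by
  obtain ⟨H, hH⟩ : ∃ H : SimpleGraph V, ∀ u v, H.Adj u v ↔ G.Adj u v ∨ (u ≠ v ∧ ∃ w,
      A u w ∧ A v w ∧
        ((univ.filter fun x => A u x).card ≤ 1 ∨ (univ.filter fun x => A v x).card ≤ 1)) :=
   ⟨{ Adj := fun u v => G.Adj u v ∨ (u ≠ v ∧ ∃ w, A u w ∧ A v w ∧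
        ((univ.filter fun x => A u x).card ≤ 1 ∨ (univ.filter fun x => A v x).card ≤ 1))
      symm := ⟨by
        rintro u v (h | ⟨h, w, h1, h2, h3⟩)
        · exact Or.inl h.symm
        · exact Or.inr ⟨h.symm, w, h2, h1, h3.symm⟩⟩
      loopless := ⟨by
        rintro u (h | ⟨h, -⟩)
        · exact G.irrefl h
        · exact h rfl⟩ }, fun _ _ => Iff.rfl⟩
  have hcol : H.Colorable 6 := by
    refine H.colorable_of_forall_exists_card_lt 6 fun S hS => ?_
    by_cases hex : ∃ v ∈ S, (univ.filter fun x => A v x).card ≤ 1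
    · obtain ⟨v, hv, hout⟩ := hex
      refine ⟨v, hv, ?_⟩
      have hshare : (univ.filter fun x => v ≠ x ∧ ∃ w, A v w ∧ A x w).card ≤ 1 := by
        by_cases hw : ∃ w, A v w
        · obtain ⟨w, hw⟩ := hw
          have hsub : (univ.filter fun x => v ≠ x ∧ ∃ w, A v w ∧ A x w) ⊆
              (univ.filter fun x => A x w).erase v := by
            intro x hx
            obtain ⟨hvx, w', h1, h2⟩ := (mem_filter.1 hx).2
            have : w' = w := card_le_one.1 hout w' (by simpa using h1) w (by simpa using hw)
            subst this
            simpa [hvx.symm] using h2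
          have h := card_le_card hsub
          rw [card_erase_of_mem (by simpa using hw)] at h
          have := hin w
          omega
        · rw [card_le_one]
          intro x hx
          obtain ⟨-, w, h1, -⟩ := (mem_filter.1 hx).2
          exact (hw ⟨w, h1⟩).elim
      have hsub : (S.filter fun u => H.Adj v u) ⊆ (univ.filter fun u => G.Adj v u) ∪
          univ.filter fun x => v ≠ x ∧ ∃ w, A v w ∧ A x w := by
        intro u hu
        rcases (hH _ _).1 (mem_filter.1 hu).2 with h | ⟨h, w, h1, h2, -⟩
        · exact mem_union_left _ (by simpa using h)
        · exact mem_union_right _ (mem_filter.2 ⟨mem_univ _, h, w, h1, h2⟩)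
      have := (card_le_card hsub).trans (card_union_le _ _)
      have := hG v
      omega
    · push Not at hex
      obtain ⟨v, hv⟩ := hS
      refine ⟨v, hv, lt_of_le_of_lt (card_le_card ?_) ((hG v).trans_lt (by norm_num))⟩
      intro u hu
      obtain ⟨huS, huv⟩ := mem_filter.1 hu
      obtain h | ⟨-, w, -, -, h⟩ := (hH _ _).1 huv
      · simpa using h
      · have := hex v hv
        have := hex u huS
        omega
  obtain ⟨c⟩ := hcol
  exact ⟨c, fun u v h => c.valid ((hH _ _).2 (Or.inl h)),
    fun u v w huv hu hv hout => c.valid ((hH _ _).2 (Or.inr ⟨huv, w, hu, hv, Or.inl hout⟩))⟩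

/-- Every set `D` of vertices of a finite graph contains an independent set `I` that dominates
`D`. -/
theorem SimpleGraph.exists_isIndepSet_dominating [Fintype V] (G : SimpleGraph V) (D : Set V) :
    ∃ I ⊆ D, (∀ u ∈ I, ∀ v ∈ I, ¬ G.Adj u v) ∧ ∀ v ∈ D, v ∉ I → ∃ u ∈ I, G.Adj v u := by
  obtain ⟨I, hI⟩ := (Set.toFinite {I : Set V | I ⊆ D ∧ ∀ u ∈ I, ∀ v ∈ I, ¬ G.Adj u v}).exists_maximal
    ⟨∅, by simp⟩
  refine ⟨I, hI.prop.1, hI.prop.2, fun v hv hvI => ?_⟩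
  by_contra! h
  refine hvI (hI.le_of_ge (y := insert v I) ⟨Set.insert_subset hv hI.prop.1, ?_⟩
    (Set.subset_insert v I) (Set.mem_insert v I))
  rintro a (rfl | ha) b (rfl | hb)
  · exact G.irrefl
  · exact h b hb
  · exact fun hab => h a ha hab.symm
  · exact hI.prop.2 a ha b hb

/-- Every finite simple graph with maximum degree exactly 5 admits a
locally irregular total coloring with 7 colors, i.e. `tlir(G) ≤ 7`. -/
theorem stmt11 {V : Type*} [Fintype V] (G : SimpleGraph V) [DecidableRel G.Adj]
    (hmax : G.maxDegree = 5) : HasTLIR G 7 := by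
  have hdeg : ∀ v, (univ.filter fun u => G.Adj v u).card ≤ 5 := fun v => by
    have h := G.degree_le_maxDegree v
    rw [hmax, ← G.card_neighborFinset_eq_degree, G.neighborFinset_eq_filter] at h
    convert h
  obtain ⟨I, hID, hI, hdom⟩ :=
    G.exists_isIndepSet_dominating {v | (univ.filter fun u => G.Adj v u).card = 5}
  obtain ⟨R, hRG⟩ : ∃ R : SimpleGraph V, ∀ u v, R.Adj u v ↔ G.Adj u v ∧ u ∉ I ∧ v ∉ I :=
   ⟨{ Adj := fun u v => G.Adj u v ∧ u ∉ I ∧ v ∉ I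
      symm := ⟨fun _ _ h => ⟨h.1.symm, h.2.2, h.2.1⟩⟩
      loopless := ⟨fun _ h => G.irrefl h.1⟩ }, fun _ _ => Iff.rfl⟩
  have hR : ∀ v, (univ.filter fun u => R.Adj v u).card ≤ 4 := by
    intro v
    have hsub : (univ.filter fun u => R.Adj v u) ⊆ univ.filter fun u => G.Adj v u :=
      monotone_filter_right _ fun _ _ h => ((hRG _ _).1 h).1
    by_cases hv : v ∈ I
    · have : (univ.filter fun u => R.Adj v u) = ∅ := filter_eq_empty_iff.2 fun _ _ h =>
        ((hRG _ _).1 h).2.1 hv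
      simp [this]
    by_cases h5 : (univ.filter fun u => G.Adj v u).card = 5
    · obtain ⟨u, hu, hvu⟩ := hdom v h5 hv
      have hlt : (univ.filter fun u => R.Adj v u) ⊂ univ.filter fun u => G.Adj v u :=
        (ssubset_iff_of_subset hsub).2
          ⟨u, by simpa using hvu, fun h => ((hRG _ _).1 (mem_filter.1 h).2).2.2 hu⟩
      have := card_lt_card hlt
      omega
    · have := card_le_card hsub
      have := hdeg v
      omega
  obtain ⟨B, hB, hin⟩ := exists_isOrientation_indegree_le R 2 hR
  obtain ⟨c, hc, hcB⟩ := exists_coloring_inNeighbors_ne hR hin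
  have hBG : ∀ {u v}, B u v → G.Adj u v ∧ u ∉ I ∧ v ∉ I := fun h => (hRG _ _).1 (hB.adj h)
  obtain ⟨A, hAB⟩ : ∃ A : V → V → Prop, ∀ u v, A u v ↔ (u ∈ I ∧ G.Adj u v) ∨ B u v :=
    ⟨_, fun _ _ => Iff.rfl⟩
  have hA : IsOrientation G A := by
    refine ⟨fun {u v} h => ?_, fun {u v} h => ?_, fun {u v} h h' => ?_⟩
    · rcases (hAB _ _).1 h with h | h
      exacts [h.2, (hBG h).1]
    · rw [hAB, hAB]
      by_cases hu : u ∈ I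
      · exact Or.inl (Or.inl ⟨hu, h⟩)
      by_cases hv : v ∈ I
      · exact Or.inr (Or.inl ⟨hv, h.symm⟩)
      exact (hB.total ((hRG u v).2 ⟨h, hu, hv⟩)).imp Or.inr Or.inr
    · rcases (hAB _ _).1 h with h | h <;> rcases (hAB _ _).1 h' with h' | h'
      exacts [hI _ h.1 _ h'.1 h.2, (hBG h').2.2 h.1, (hBG h).2.2 h'.1, hB.asymm h h']
  refine hA.hasTLIR (fun v => if v ∈ I then 0 else (c v).succ) ?_ ?_
  · intro u v huv
    by_cases hu : u ∈ I <;> by_cases hv : v ∈ I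
    · exact (hI u hu v hv huv).elim
    · simp [hu, hv, (Fin.succ_ne_zero _).symm]
    · simp [hu, hv]
    · simpa [hu, hv] using hc u v ((hRG u v).2 ⟨huv, hu, hv⟩)
  · intro v u hvu
    by_cases hv : v ∈ I
    · have hout : (univ.filter fun w => A v w) =
          univ.filter fun w => G.Adj v w :=
        filter_congr fun w _ => ⟨hA.adj, fun h => (hAB v w).2 (Or.inl ⟨hv, h⟩)⟩
      have h5 : (univ.filter fun w => G.Adj v w).card = 5 := hID hv
      rw [hout, h5]
      refine ((card_le_card fun w hw => ?_).trans_lt ((hdeg u).trans_lt (by norm_num))).ne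
      exact mem_filter.2 ⟨mem_univ _, (hA.adj (mem_filter.1 hw).2.1).symm⟩
    · have hvu' : B v u := ((hAB v u).1 hvu).resolve_left fun h => hv h.1
      have hout : (univ.filter fun w => A v w) =
          univ.filter fun w => B v w := filter_congr fun w _ => by simp [hAB, hv]
      have hcolor : ∀ w, (A w u ∧
          (if w ∈ I then (0 : Fin 7) else (c w).succ) =
            if v ∈ I then 0 else (c v).succ) → B w u ∧ c w = c v := by
        rintro w ⟨hw, hwc⟩
        by_cases hwI : w ∈ I
        · simp only [hwI, hv, if_true, if_false] at hwc
          exact (Fin.succ_ne_zero _ hwc.symm).elim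
        · simp only [hwI, hv, if_false] at hwc
          exact ⟨((hAB w u).1 hw).resolve_left fun h => hwI h.1, Fin.succ_injective _ hwc⟩
      rw [hout]
      intro heq
      have hpos : 0 < (univ.filter fun w => B v w).card :=
        card_pos.2 ⟨u, mem_filter.2 ⟨mem_univ _, hvu'⟩⟩
      have hle := (card_le_card (monotone_filter_right univ
        fun w _ h => (hcolor w h).1)).trans (hin u)
      obtain ⟨w, hw, hwv⟩ := exists_mem_ne (lt_of_lt_of_eq (by omega) heq.symm) v
      obtain ⟨hwu, hwc⟩ := hcolor w (mem_filter.1 hw).2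
      exact hcB v w u hwv.symm hvu' hwu (by omega) hwc.symm
end

section
/- For every finite simple graph G, the locally irregular total chromatic index satisfies tlir(G) ≤ 220. -/
open Finset
open scoped Classical

variable {V : Type*}

namespace TLIR

/-- The degree of `v` in `H`. -/
noncomputable def deg [Fintype V] (H : SimpleGraph V) (v : V) : ℕ :=
  (univ.filter fun u => H.Adj v u).card

/-- Adjacent vertices of `H` have distinct degrees. -/
def LocIrr [Fintype V] (H : SimpleGraph V) : Prop :=
  ∀ u v, H.Adj u v → deg H u ≠ deg H v

/-- The edges of `G` split into locally irregular graphs indexed by `ι`. -/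
def Dec [Fintype V] (ι : Type) (G : SimpleGraph V) : Prop :=
  ∃ H : ι → SimpleGraph V, (∀ u v, G.Adj u v ↔ ∃ i, (H i).Adj u v) ∧
    (∀ i j u v, (H i).Adj u v → (H j).Adj u v → i = j) ∧ ∀ i, LocIrr (H i)

section Basic

variable [Fintype V]

theorem Dec.of_family {ι : Type} (H : ι → SimpleGraph V)
    (hd : ∀ i j u v, (H i).Adj u v → (H j).Adj u v → i = j) (hl : ∀ i, LocIrr (H i)) :
    Dec ι (⨆ i, H i) :=
  ⟨H, by simp, hd, hl⟩

theorem Dec.add {ι κ : Type} {G H : SimpleGraph V} (hle : H ≤ G) (h₁ : Dec ι H)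
    (h₂ : Dec κ (G \ H)) : Dec (ι ⊕ κ) G := by
  obtain ⟨A, hA, hA', hA''⟩ := h₁
  obtain ⟨B, hB, hB', hB''⟩ := h₂
  refine ⟨Sum.elim A B, fun u v => ?_, ?_, ?_⟩
  · rw [Sum.exists]
    simp only [Sum.elim_inl, Sum.elim_inr, ← hA, ← hB, SimpleGraph.sdiff_adj]
    have := @hle u v
    tauto
  · have key : ∀ i j u v, (A i).Adj u v → ¬ (B j).Adj u v := fun i j u v h h' =>
      ((hB u v).2 ⟨j, h'⟩).2 ((hA u v).2 ⟨i, h⟩)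
    rintro (i | i) (j | j) u v h h'
    · exact congrArg _ (hA' i j u v h h')
    · exact (key i j u v h h').elim
    · exact (key j i u v h' h).elim
    · exact congrArg _ (hB' i j u v h h')
  · rintro (i | i)
    · exact hA'' i
    · exact hB'' i

theorem Dec.of_embedding {ι κ : Type} (e : ι ↪ κ) {G : SimpleGraph V} (h : Dec ι G) :
    Dec κ G := by
  obtain ⟨A, hA, hA', hA''⟩ := h
  refine ⟨fun k => ⨆ i : {i // e i = k}, A i, fun u v => ?_, ?_, fun k u v huv => ?_⟩
  · simp [hA]
  · simp only [SimpleGraph.iSup_adj, Subtype.exists, exists_prop]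
    rintro k l u v ⟨i, rfl, hi⟩ ⟨j, rfl, hj⟩
    rw [hA' i j u v hi hj]
  · simp only [SimpleGraph.iSup_adj, Subtype.exists, exists_prop] at huv
    obtain ⟨i, rfl, hi⟩ := huv
    have : (⨆ j : {j // e j = e i}, A j) = A i := by
      ext x y
      simp
    simp only [this]
    exact hA'' i u v hi

theorem Dec.sdiff_trans {ι κ : Type} {G T T' : SimpleGraph V} (h₁ : T ≤ G)
    (h₂ : T' ≤ T) (d₁ : Dec ι (G \ T)) (d₂ : Dec κ (T \ T')) : Dec (ι ⊕ κ) (G \ T') := by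
  refine Dec.add (fun u v h => ?_) d₁ ?_
  · simp only [SimpleGraph.sdiff_adj] at h ⊢
    exact ⟨h.1, fun h' => h.2 (h₂ h')⟩
  · convert d₂ using 1
    ext u v
    simp only [SimpleGraph.sdiff_adj]
    have := @h₁ u v
    have := @h₂ u v
    tauto

theorem deg_mono {H K : SimpleGraph V} (h : H ≤ K) (v : V) : deg H v ≤ deg K v :=
  card_le_card (monotone_filter_right _ fun _ _ hu => h hu)

theorem deg_lt_deg {H K : SimpleGraph V} (h : H ≤ K) {u v : V} (hK : K.Adj v u)
    (hH : ¬ H.Adj v u) : deg H v < deg K v := by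
  refine card_lt_card ((ssubset_iff_of_subset ?_).2 ⟨u, by simpa using hK, by simpa using hH⟩)
  exact monotone_filter_right _ fun _ _ hu => h hu

theorem deg_pos {H : SimpleGraph V} {u v : V} (h : H.Adj u v) : 0 < deg H u :=
  card_pos.2 ⟨v, by simpa using h⟩

theorem deg_eq_card {H : SimpleGraph V} {v : V} {s : Finset V} (h : ∀ u, H.Adj v u ↔ u ∈ s) :
    deg H v = #s :=
  congrArg card (Finset.ext fun u => by simp [h])

theorem deg_le_card {H : SimpleGraph V} {v : V} {s : Finset V} (h : ∀ u, H.Adj v u → u ∈ s) :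
    deg H v ≤ #s :=
  card_le_card fun u hu => h u (by simpa using hu)

end Basic

section Parity

variable [Fintype V]

/-- Spanning forest of `Γ`: `par` maps every non-root to its parent, `rk` decreases along `par`,
and `top c` is a vertex of the component `c` that is nobody's parent. -/
theorem exists_rooted_forest (Γ : SimpleGraph V) :
    ∃ (par : V → V) (rk : V → ℕ) (root top : Γ.ConnectedComponent → V),
      (∀ c, Γ.connectedComponentMk (root c) = c) ∧ (∀ c, Γ.connectedComponentMk (top c) = c) ∧
      (∀ c, rk (root c) = 0) ∧
      ∀ v, v ≠ root (Γ.connectedComponentMk v) → Γ.Adj v (par v) ∧ rk (par v) < rk v ∧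
        par v ≠ top (Γ.connectedComponentMk (par v)) := by
  have hroot : ∀ c : Γ.ConnectedComponent, Γ.connectedComponentMk c.out = c :=
    fun c => Quot.out_eq c
  set rk : V → ℕ := fun v => Γ.dist (Γ.connectedComponentMk v).out v with hrk
  have htop : ∀ c : Γ.ConnectedComponent, ∃ t, Γ.connectedComponentMk t = c ∧
      ∀ v, Γ.connectedComponentMk v = c → rk v ≤ rk t := by
    intro c
    obtain ⟨t, ht, hm⟩ := exists_max_image (univ.filter fun v => Γ.connectedComponentMk v = c) rk
      ⟨c.out, by simp [hroot]⟩
    simp only [mem_filter, mem_univ, true_and] at ht hm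
    exact ⟨t, ht, hm⟩
  choose top htop htop' using htop
  have hcloser : ∀ v r, v ≠ r → Γ.Reachable v r → ∃ w, Γ.Adj v w ∧ Γ.dist r w < Γ.dist r v := by
    intro v r hne hre
    obtain ⟨p, hp⟩ := hre.exists_walk_length_eq_dist
    cases p with
    | nil => exact (hne rfl).elim
    | cons h p =>
      rename_i w
      have := SimpleGraph.dist_le p
      rw [SimpleGraph.Walk.length_cons] at hp
      refine ⟨w, h, ?_⟩
      rw [SimpleGraph.dist_comm (v := w), SimpleGraph.dist_comm (v := v)]
      omega
  have hpar : ∀ v, ∃ w, v ≠ (Γ.connectedComponentMk v).out → Γ.Adj v w ∧ rk w < rk v := by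
    intro v
    by_cases hv : v = (Γ.connectedComponentMk v).out
    · exact ⟨v, fun h => (h hv).elim⟩
    obtain ⟨w, h, hw⟩ := hcloser v _ hv (SimpleGraph.ConnectedComponent.exact (hroot _).symm)
    refine ⟨w, fun _ => ⟨h, ?_⟩⟩
    have hc : Γ.connectedComponentMk w = Γ.connectedComponentMk v :=
      SimpleGraph.ConnectedComponent.sound h.symm.reachable
    simpa only [hrk, hc] using hw
  choose par hpar using hpar
  refine ⟨par, rk, fun c => c.out, top, hroot, htop, fun c => ?_, fun v hv => ?_⟩
  · simp [hrk, hroot]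
  · obtain ⟨h₁, h₂⟩ := hpar v hv
    refine ⟨h₁, h₂, fun h => ?_⟩
    have := htop' (Γ.connectedComponentMk (par v)) v
      (SimpleGraph.ConnectedComponent.sound h₁.reachable)
    rw [← h] at this
    omega

/-- In each component choose whether to delete the vertex `top c`. If the prescribed parities `τ`
sum to zero over the remaining vertices of each component, some set of parent edges avoiding the
deleted vertices realises them. -/
theorem exists_parity_subforest (Γ : SimpleGraph V) :
    ∃ top : Γ.ConnectedComponent → V, (∀ c, Γ.connectedComponentMk (top c) = c) ∧
      ∀ (Z : Set V) (τ : V → ZMod 2), (∀ v ∈ Z, v = top (Γ.connectedComponentMk v)) →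
        (∀ c, ∑ v with Γ.connectedComponentMk v = c ∧ v ∉ Z, τ v = 0) →
        ∃ (par : V → V) (rk : V → ℕ) (D : Finset V),
          (∀ v ∈ D, v ∉ Z ∧ par v ∉ Z ∧ Γ.Adj v (par v) ∧ rk (par v) < rk v) ∧
          ∀ v, v ∉ Z → (if v ∈ D then 1 else 0) + ((D.filter fun u => par u = v).card : ZMod 2)
            = τ v := by
  obtain ⟨par, rk, root, top, hroot, htop, hrk, hpar⟩ := exists_rooted_forest Γ
  refine ⟨top, htop, fun Z τ hZ hτ => ?_⟩
  have wf : WellFounded fun u v : V => rk v < rk u :=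
    haveI : IsTrans V fun u v : V => rk v < rk u := ⟨fun a b c h h' => h'.trans h⟩
    haveI : Std.Irrefl fun u v : V => rk v < rk u := ⟨fun a => lt_irrefl _⟩
    Finite.wellFounded_of_trans_of_irrefl _
  obtain ⟨d, hd⟩ : ∃ d : V → ZMod 2, ∀ v, d v = if v ∈ Z then 0 else
      τ v + ∑ u, if rk v < rk u then (if par u = v then d u else 0) else 0 := by
    refine ⟨wf.fix fun v ih => if v ∈ Z then 0 else
      τ v + ∑ u, if h : rk v < rk u then (if par u = v then ih u h else 0) else 0, fun v => ?_⟩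
    rw [wf.fix_eq]
    simp only [dite_eq_ite]
  have hd' : ∀ v, v ∉ Z → d v = τ v + ∑ u with rk v < rk u ∧ par u = v, d u := by
    intro v hv
    rw [hd, if_neg hv, sum_filter]
    clear hd
    congr 1
    refine sum_congr rfl fun u _ => ?_
    split_ifs <;> simp_all
  have hdr : ∀ c, d (root c) = 0 := by
    intro c
    by_cases hz : root c ∈ Z
    · rw [hd, if_pos hz]
    have e1 : ∑ v with Γ.connectedComponentMk v = c, d v =
        ∑ v with Γ.connectedComponentMk v = c ∧ v ∉ Z, d v := by
      refine (sum_subset (fun v hv => ?_) fun v h h' => ?_).symm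
      · simp only [mem_filter] at hv ⊢
        exact ⟨hv.1, hv.2.1⟩
      simp only [mem_filter, mem_univ, true_and, not_and, not_not] at h h'
      have := h' h
      rw [hd, if_pos this]
    have e2 : ∑ v with Γ.connectedComponentMk v = c ∧ v ∉ Z, d v =
        ∑ v with Γ.connectedComponentMk v = c ∧ v ∉ Z,
          ∑ u with rk v < rk u ∧ par u = v, d u := by
      rw [sum_congr rfl fun v hv => hd' v (mem_filter.1 hv).2.2, sum_add_distrib, hτ,
        zero_add]
    have e3 : ∑ v with Γ.connectedComponentMk v = c ∧ v ∉ Z,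
          ∑ u with rk v < rk u ∧ par u = v, d u =
        ∑ u with Γ.connectedComponentMk u = c ∧ u ≠ root c, d u := by
      rw [← sum_fiberwise_of_maps_to (g := par)
        (s := univ.filter fun u => Γ.connectedComponentMk u = c ∧ u ≠ root c)
        (t := univ.filter fun v => Γ.connectedComponentMk v = c ∧ v ∉ Z)]
      · refine sum_congr rfl fun v hv => sum_congr ?_ fun _ _ => rfl
        simp only [mem_filter, mem_univ, true_and] at hv
        ext u
        simp only [mem_filter, mem_univ, true_and]
        constructor
        · rintro ⟨h, rfl⟩
          have hne : u ≠ root (Γ.connectedComponentMk u) := by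
            intro h'
            have := hrk (Γ.connectedComponentMk u)
            rw [← h'] at this
            omega
          have := SimpleGraph.ConnectedComponent.sound (hpar u hne).1.reachable
          rw [hv.1] at this
          exact ⟨⟨this, this ▸ hne⟩, rfl⟩
        · rintro ⟨⟨rfl, h⟩, rfl⟩
          exact ⟨(hpar u h).2.1, rfl⟩
      · intro u hu
        simp only [mem_filter, mem_univ, true_and] at hu ⊢
        obtain ⟨rfl, hu⟩ := hu
        obtain ⟨h1, h2, h3⟩ := hpar u hu
        exact ⟨(SimpleGraph.ConnectedComponent.sound h1.reachable).symm, fun h => h3 (hZ _ h)⟩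
    have e4 : ∑ v with Γ.connectedComponentMk v = c, d v =
        d (root c) + ∑ u with Γ.connectedComponentMk u = c ∧ u ≠ root c, d u := by
      rw [← add_sum_erase _ _ (show root c ∈ univ.filter fun v => Γ.connectedComponentMk v = c by
        simp [hroot])]
      congr 1
      refine sum_congr ?_ fun _ _ => rfl
      ext u
      simp [and_comm]
    have := e4.symm.trans (e1.trans (e2.trans e3))
    simpa using this
  have hD : ∀ v, d v ≠ 0 → v ∉ Z ∧ par v ∉ Z ∧ Γ.Adj v (par v) ∧ rk (par v) < rk v := by
    intro v hv
    have h1 : v ∉ Z := fun h => hv (by rw [hd, if_pos h])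
    have h2 : v ≠ root (Γ.connectedComponentMk v) := fun h => hv (by rw [h, hdr])
    obtain ⟨h3, h4, h5⟩ := hpar v h2
    exact ⟨h1, fun h => h5 (hZ _ h), h3, h4⟩
  have hone : ∀ x : ZMod 2, x = if x ≠ 0 then 1 else 0 := by decide
  refine ⟨par, rk, univ.filter fun v => d v ≠ 0, fun v hv => hD v (by simpa using hv),
    fun v hv => ?_⟩
  have e : (((univ.filter fun v => d v ≠ 0).filter fun u => par u = v).card : ZMod 2) =
      ∑ u with rk v < rk u ∧ par u = v, d u := by
    rw [card_eq_sum_ones, Nat.cast_sum, filter_filter, sum_filter, sum_filter]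
    refine sum_congr rfl fun u _ => ?_
    by_cases h : d u = 0
    · simp [h]
    · have := (hD u h).2.2.2
      have h1 := hone (d u)
      rw [if_pos h] at h1
      by_cases h' : par u = v
      · subst h'
        simp [h1, this]
      · simp [h']
  rw [e]
  have := hd' v hv
  have h2 := hone (d v)
  simp only [mem_filter, mem_univ, true_and]
  rw [← h2, this, add_assoc, CharTwo.add_self_eq_zero, add_zero]

end Parity

section Orientation

theorem flip_indicator (e : Bool → V) (he : e true ≠ e false) (s : Bool) (p : Prop)
    [Decidable p] (v : V) :
    (if e (if p then !s else s) = v then (1 : ZMod 2) else 0) = (if e s = v then 1 else 0) +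
      if p then (if e true = v ∨ e false = v then 1 else 0) else 0 := by
  have h2 : (1 : ZMod 2) + 1 = 0 := by decide
  by_cases hp : p <;> cases s <;> by_cases h5 : e true = v <;> by_cases h6 : e false = v <;>
    simp only [hp, if_true, if_false, Bool.not_true, Bool.not_false, h5, h6, or_true,
      or_false, h2, add_zero, zero_add]
  all_goals exact (he (h5.trans h6.symm)).elim

theorem pair_indicator (e : Bool → V) (he : e true ≠ e false) (b : Bool) (v : V) :
    (if e true = v ∨ e false = v then (1 : ZMod 2) else 0) =
      (if e b = v then 1 else 0) + if e (!b) = v then 1 else 0 := by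
  cases b <;> by_cases h5 : e true = v <;> by_cases h6 : e false = v <;>
    simp only [if_true, if_false, Bool.not_true, Bool.not_false, h5, h6, or_true,
      or_false, add_zero, zero_add]
  all_goals exact (he (h5.trans h6.symm)).elim

variable [Fintype V]

/-- In a finite family of pairs of vertices one can choose a member of each pair such that every
vertex is chosen either never or an odd number of times. -/
theorem exists_odd_choice {ι : Type*} [Fintype ι] (e : ι → Bool → V)
    (he : ∀ i, e i true ≠ e i false) :
    ∃ σ : ι → Bool, ∀ v, (univ.filter fun i => e i (σ i) = v).card = 0 ∨
      Odd (univ.filter fun i => e i (σ i) = v).card := by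
  rcases isEmpty_or_nonempty ι with hι | hι
  · exact ⟨fun _ => true, fun v => .inl (by simp)⟩
  have hnot : ∀ a b : Bool, a ≠ b → a = !b := by decide
  set Γ : SimpleGraph V := SimpleGraph.fromRel fun u v => ∃ i, e i true = u ∧ e i false = v with hΓ
  have hadj : ∀ i b, Γ.Adj (e i b) (e i !b) := by
    intro i b
    have := he i
    cases b
    · simp only [hΓ, SimpleGraph.fromRel_adj, Bool.not_false]
      exact ⟨this.symm, .inr ⟨i, rfl, rfl⟩⟩
    · simp only [hΓ, SimpleGraph.fromRel_adj, Bool.not_true]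
      exact ⟨this, .inl ⟨i, rfl, rfl⟩⟩
  have hcomp : ∀ i b, Γ.connectedComponentMk (e i b) = Γ.connectedComponentMk (e i true) := by
    intro i b
    cases b
    · exact SimpleGraph.ConnectedComponent.sound (hadj i false).reachable
    · rfl
  have hwit : ∀ u v, Γ.Adj u v → ∃ i b, e i b = u ∧ e i (!b) = v := by
    rintro u v ⟨-, ⟨i, h, h'⟩ | ⟨i, h, h'⟩⟩
    · exact ⟨i, true, h, h'⟩
    · exact ⟨i, false, h', h⟩
  obtain ⟨top, htop, hpar⟩ := exists_parity_subforest Γ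
  obtain ⟨Z, hZ⟩ : ∃ Z : Set V, ∀ v, v ∈ Z ↔ v = top (Γ.connectedComponentMk v) ∧
    ((univ.filter fun i => Γ.connectedComponentMk (e i true) = Γ.connectedComponentMk v).card +
      (univ.filter fun w => Γ.connectedComponentMk w = Γ.connectedComponentMk v).card : ZMod 2)
      ≠ 0 := ⟨{v | _}, fun _ => Iff.rfl⟩
  set σ₀ : ι → Bool := fun i => decide (e i true ∉ Z) with hσ₀
  have hσ₀Z : ∀ i, e i (σ₀ i) ∉ Z := by
    intro i
    by_cases h : e i true ∈ Z
    · simp only [hσ₀, h, not_true_eq_false, decide_false]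
      intro h'
      apply he i
      rw [((hZ _).1 h).1, ((hZ _).1 h').1, hcomp i false]
    · simp [hσ₀, h]
  set r : V → ℕ := fun v => (univ.filter fun i => e i (σ₀ i) = v).card with hr
  obtain ⟨par, rk, D, hD, hDτ⟩ := hpar Z (fun v => r v + 1) (fun v h => ((hZ v).1 h).1) <| by
    intro c
    have h1 : ∑ v with Γ.connectedComponentMk v = c ∧ v ∉ Z, r v =
        (univ.filter fun i => Γ.connectedComponentMk (e i true) = c).card := by
      rw [card_eq_sum_card_fiberwise (f := fun i => e i (σ₀ i))
        (t := univ.filter fun v => Γ.connectedComponentMk v = c ∧ v ∉ Z)]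
      · refine sum_congr rfl fun v hv => ?_
        rw [hr, filter_filter]
        refine congrArg card (Finset.ext fun i => ?_)
        simp only [mem_filter, mem_univ, true_and] at hv ⊢
        constructor
        · rintro rfl
          exact ⟨(hcomp i _).symm.trans hv.1, rfl⟩
        · exact fun h => h.2
      · intro i hi
        simp only [coe_filter, Set.mem_ofPred_eq, mem_univ, true_and] at hi ⊢
        exact ⟨(hcomp i _).trans hi, hσ₀Z i⟩
    rw [sum_add_distrib, ← Nat.cast_sum, h1, sum_const, nsmul_eq_mul, mul_one]
    have hone : ∀ x : ZMod 2, x ≠ 0 → x = 1 := by decide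
    by_cases hc : ((univ.filter fun i => Γ.connectedComponentMk (e i true) = c).card +
      (univ.filter fun w => Γ.connectedComponentMk w = c).card : ZMod 2) = 0
    · convert hc using 4
      ext v
      simp only [mem_filter, mem_univ, true_and, and_iff_left_iff_imp]
      rintro rfl h
      exact ((hZ _).1 h).2 hc
    · have h2 : (univ.filter fun v => Γ.connectedComponentMk v = c ∧ v ∉ Z) =
          (univ.filter fun v => Γ.connectedComponentMk v = c).erase (top c) := by
        ext v
        simp only [mem_filter, mem_univ, true_and, mem_erase]
        constructor
        · rintro ⟨rfl, h⟩
          exact ⟨fun h' => h ((hZ _).2 ⟨h', hc⟩), rfl⟩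
        · rintro ⟨h, rfl⟩
          exact ⟨rfl, fun h' => h ((hZ _).1 h').1⟩
      have h3 := card_erase_add_one
        (show top c ∈ univ.filter fun v => Γ.connectedComponentMk v = c by simp [htop])
      rw [← h3] at hc
      have := hone _ hc
      rw [h2]
      push_cast at this
      linear_combination this
  choose! w b hw hw' using fun v (hv : v ∈ D) => hwit _ _ (hD v hv).2.2.1
  have hinj : Set.InjOn w (D : Set V) := by
    intro u hu v hv huv
    have h1 := hw u hu
    have h2 := hw v hv
    have h3 := hw' u hu
    have h4 := hw' v hv
    rw [← huv] at h2 h4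
    by_cases hb : b u = b v
    · rw [hb] at h1
      exact h1.symm.trans h2
    · rw [hnot (b v) (b u) (Ne.symm hb)] at h2 h4
      rw [Bool.not_not] at h4
      have h5 : u = par v := h1.symm.trans h4
      have h6 : v = par u := h2.symm.trans h3
      have h7 := (hD u hu).2.2.2
      have h8 := (hD v hv).2.2.2
      rw [← h6] at h7
      rw [← h5] at h8
      omega
  have hFZ : ∀ v ∈ D, ∀ c, e (w v) c ∉ Z := by
    intro v hv c
    by_cases hc : c = b v
    · rw [hc, hw v hv]
      exact (hD v hv).1
    · rw [hnot _ _ hc, hw' v hv]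
      exact (hD v hv).2.1
  refine ⟨fun i => if i ∈ D.image w then !σ₀ i else σ₀ i, fun v => ?_⟩
  by_cases hv : v ∈ Z
  · left
    rw [card_eq_zero, filter_eq_empty_iff]
    rintro i - h
    dsimp only at h
    split_ifs at h with hi
    · obtain ⟨u, hu, rfl⟩ := mem_image.1 hi
      exact hFZ u hu _ (h ▸ hv)
    · exact hσ₀Z i (h ▸ hv)
  right
  rw [← Nat.not_even_iff_odd, ← ZMod.natCast_eq_zero_iff_even]
  have key : ((univ.filter fun i => e i (if i ∈ D.image w then !σ₀ i else σ₀ i) = v).card : ZMod 2)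
      = r v + ∑ i ∈ D.image w, if e i true = v ∨ e i false = v then 1 else 0 := by
    have hflip := fun i => flip_indicator (e i) (he i) (σ₀ i) (i ∈ D.image w) v
    rw [hr, ← sum_boole, sum_congr rfl fun i _ => hflip i, sum_add_distrib, sum_boole,
      sum_ite_mem, univ_inter]
  rw [key, sum_image hinj]
  have : ∀ u ∈ D, (if e (w u) true = v ∨ e (w u) false = v then (1 : ZMod 2) else 0) =
      (if u = v then 1 else 0) + if par u = v then 1 else 0 := by
    intro u hu
    rw [pair_indicator _ (he _) (b u), hw u hu, hw' u hu]
  rw [sum_congr rfl this, sum_add_distrib, sum_ite_eq', sum_boole, hDτ v hv, ← add_assoc,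
    CharTwo.add_self_eq_zero, zero_add]
  exact one_ne_zero

end Orientation

section Absorb

variable [Fintype V]

theorem exists_list_coloring (G : SimpleGraph V) (L : V → Finset ℕ) (h : ∀ v, deg G v < #(L v)) :
    ∃ c : V → ℕ, (∀ v, c v ∈ L v) ∧ ∀ u v, G.Adj u v → c u ≠ c v := by
  suffices ∀ s : Finset V, ∃ c : V → ℕ, (∀ v, c v ∈ L v) ∧
      ∀ u ∈ s, ∀ v ∈ s, G.Adj u v → c u ≠ c v by
    obtain ⟨c, h₁, h₂⟩ := this univ
    exact ⟨c, h₁, fun u v => h₂ u (mem_univ _) v (mem_univ _)⟩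
  intro s
  induction s using Finset.induction_on with
  | empty =>
    choose c hc using fun v => card_pos.1 ((Nat.zero_le _).trans_lt (h v))
    exact ⟨c, hc, by simp⟩
  | insert a s ha ih =>
    obtain ⟨c, hc, hs⟩ := ih
    obtain ⟨x, hx, hx'⟩ : ∃ x ∈ L a, x ∉ (univ.filter fun u => G.Adj a u).image c :=
      exists_mem_notMem_of_card_lt_card (card_image_le.trans_lt (h a))
    simp only [mem_image, mem_filter, mem_univ, true_and, not_exists, not_and] at hx'
    refine ⟨Function.update c a x, fun v => ?_, fun u hu v hv huv => ?_⟩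
    · by_cases hv : v = a
      · subst hv
        simpa using hx
      · simpa [hv] using hc v
    · by_cases h1 : u = a <;> by_cases h2 : v = a
      · exact (huv.ne (h1.trans h2.symm)).elim
      · subst h1
        simpa [h2] using (hx' v huv).imp Eq.symm
      · subst h2
        simpa [h1] using hx' u huv.symm
      · simpa [h1, h2] using hs u (mem_of_mem_insert_of_ne hu h1) v
          (mem_of_mem_insert_of_ne hv h2) huv

/-- If every vertex `a` of `A` has a reservoir `O a` of neighbours outside `A` six times as large as
its number of neighbours in `A`, then the edges inside `A` can be completed by reservoir edges to a
locally irregular graph. -/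
theorem exists_locIrr_of_reservoir (G : SimpleGraph V) (A : Set V) (O : V → Finset V)
    (hO : ∀ a ∈ A, ∀ p ∈ O a, G.Adj a p ∧ p ∉ A)
    (hcard : ∀ a ∈ A, 6 * #{u | G.Adj a u ∧ u ∈ A} ≤ #(O a)) :
    ∃ H ≤ G, LocIrr H ∧ (∀ u ∈ A, ∀ v ∈ A, G.Adj u v → H.Adj u v) ∧
      ∀ u v, H.Adj u v → u ∈ A ∧ v ∈ A ∨ u ∈ A ∧ v ∈ O u ∨ v ∈ A ∧ u ∈ O v := by
  set d : V → ℕ := fun a => #{u | G.Adj a u ∧ u ∈ A} with hd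
  obtain ⟨c, hc, hc'⟩ : ∃ c : V → ℕ,
      (∀ v, c v ∈ (range (d v + 1)).image fun y => d v + (d v % 2 + 2 * y)) ∧
      ∀ u v, (G ⊓ SimpleGraph.fromRel fun u v => u ∈ A ∧ v ∈ A).Adj u v → c u ≠ c v := by
    refine exists_list_coloring _ _ fun v => ?_
    rw [card_image_of_injective _ fun x y h => by omega, card_range,
      Nat.lt_succ_iff]
    refine deg_le_card fun u h => ?_
    simp only [SimpleGraph.inf_adj, SimpleGraph.fromRel_adj] at h
    simp only [mem_filter, mem_univ, true_and]
    tauto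
  replace hc' : ∀ u ∈ A, ∀ v ∈ A, G.Adj u v → c u ≠ c v := fun u hu v hv h =>
    hc' u v (by simp [h, h.ne, hu, hv])
  obtain ⟨x, hx⟩ : ∃ x : V → ℕ, ∀ a, x a = if a ∈ A then c a - d a else 0 := ⟨_, fun _ => rfl⟩
  have hxA : ∀ a, 0 < x a → a ∈ A := fun a h => by
    by_contra h'
    simp [hx, h'] at h
  have hcx : ∀ a ∈ A, c a = d a + x a ∧ Even (c a) ∧ x a ≤ 3 * d a := by
    intro a ha
    obtain ⟨y, hy, hy'⟩ := mem_image.1 (hc a)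
    rw [mem_range] at hy
    rw [hx, if_pos ha, Nat.even_iff]
    omega
  have hf : ∀ a, Nonempty (Fin (x a) × Bool ↪ O a) := by
    intro a
    refine Function.Embedding.nonempty_of_card_le ?_
    by_cases ha : a ∈ A
    · have h1 := hcard a ha
      have h2 := (hcx a ha).2.2
      simp only [Fintype.card_prod, Fintype.card_fin, Fintype.card_bool, Fintype.card_coe]
      simp only [hd] at h2
      omega
    · simp [hx, ha]
  let f := fun a => (hf a).some
  obtain ⟨σ, hσ⟩ := exists_odd_choice (ι := Σ a, Fin (x a)) (fun i b => (f i.1 (i.2, b) : V)) <| by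
    rintro i h
    have := (f i.1).injective (Subtype.ext h)
    simp at this
  obtain ⟨ch, hch⟩ : ∃ ch : ∀ a, Fin (x a) → V, ∀ a j, ch a j = f a (j, σ ⟨a, j⟩) :=
    ⟨_, fun _ _ => rfl⟩
  have hinj : ∀ a, Function.Injective (ch a) := by
    intro a j j' h
    rw [hch, hch] at h
    have := (f a).injective (Subtype.ext h)
    simp only [Prod.mk.injEq] at this
    exact this.1
  have hchO : ∀ a j, a ∈ A ∧ ch a j ∈ O a := fun a j =>
    ⟨hxA a (j.pos), by rw [hch]; exact (f a _).2⟩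
  have hchG : ∀ a j, G.Adj a (ch a j) ∧ ch a j ∉ A := fun a j =>
    hO a (hchO a j).1 _ (hchO a j).2
  obtain ⟨H, hHadj⟩ : ∃ H : SimpleGraph V, ∀ u v, H.Adj u v ↔
      (u ∈ A ∧ v ∈ A ∧ G.Adj u v) ∨ (∃ j, ch u j = v) ∨ ∃ j, ch v j = u := by
    refine ⟨⟨_, ⟨fun u v h => ?_⟩, ⟨fun u h => ?_⟩⟩, fun _ _ => Iff.rfl⟩
    · rcases h with h | h | h
      · exact .inl ⟨h.2.1, h.1, h.2.2.symm⟩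
      · exact .inr (.inr h)
      · exact .inr (.inl h)
    · rcases h with h | ⟨j, h⟩ | ⟨j, h⟩
      · exact h.2.2.ne rfl
      · exact (hchG u j).1.ne h.symm
      · exact (hchG u j).1.ne h.symm
  have hdegA : ∀ a ∈ A, deg H a = c a := by
    intro a ha
    have : ∀ u, H.Adj a u ↔
        u ∈ (univ.filter fun u => G.Adj a u ∧ u ∈ A) ∪ univ.image (ch a) := by
      intro u
      simp only [hHadj, mem_filter, mem_univ, true_and, mem_union, mem_image]
      have : ¬ ∃ j, ch u j = a := fun ⟨j, h⟩ => (hchG u j).2 (h ▸ ha)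
      tauto
    rw [deg_eq_card this, card_union_of_disjoint, card_image_of_injective _ (hinj a), card_univ,
      Fintype.card_fin, (hcx a ha).1]
    rw [disjoint_left]
    simp only [mem_filter, mem_univ, true_and, mem_image, not_exists]
    rintro u ⟨-, hu⟩ j rfl
    exact (hchG a j).2 hu
  have hdegP : ∀ p, p ∉ A → 0 < deg H p → Odd (deg H p) := by
    intro p hp hpos
    have : deg H p = #{i : Σ a, Fin (x a) | ch i.1 i.2 = p} := by
      symm
      refine card_bij (fun i _ => i.1) ?_ ?_ ?_
      · rintro ⟨a, j⟩ h
        simp only [mem_filter, mem_univ, true_and] at h ⊢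
        exact (hHadj _ _).2 (.inr (.inr ⟨j, h⟩))
      · rintro ⟨a, j⟩ h ⟨b, k⟩ h' (rfl : a = b)
        simp only [mem_filter, mem_univ, true_and] at h h'
        rw [hinj a (h.trans h'.symm)]
      · intro a ha
        simp only [mem_filter, mem_univ, true_and, hHadj] at ha
        rcases ha with ha | ⟨j, -⟩ | ⟨j, h⟩
        · exact (hp ha.1).elim
        · exact (hp (hchO p j).1).elim
        · exact ⟨⟨a, j⟩, by simpa using h, rfl⟩
    have h' := hσ p
    simp only [← hch] at h'
    rw [← this] at h'
    exact h'.resolve_left hpos.ne'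
  have hmix : ∀ u j, deg H u ≠ deg H (ch u j) := by
    intro u j h
    have h1 := hdegP _ (hchG u j).2 (deg_pos ((hHadj _ u).2 (.inr (.inr ⟨j, rfl⟩))))
    rw [← h, hdegA u (hchO u j).1] at h1
    exact Nat.not_even_iff_odd.2 h1 (hcx u (hchO u j).1).2.1
  refine ⟨H, fun u v h => ?_, fun u v h => ?_, fun u hu v hv h =>
    (hHadj u v).2 (.inl ⟨hu, hv, h⟩),
    fun u v h => ?_⟩
  · rcases (hHadj u v).1 h with h | ⟨j, rfl⟩ | ⟨j, rfl⟩
    · exact h.2.2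
    · exact (hchG u j).1
    · exact (hchG v j).1.symm
  · rcases (hHadj u v).1 h with h | ⟨j, rfl⟩ | ⟨j, rfl⟩
    · rw [hdegA u h.1, hdegA v h.2.1]
      exact hc' u h.1 v h.2.1 h.2.2
    · exact hmix u j
    · exact (hmix v j).symm
  · rcases (hHadj u v).1 h with h | ⟨j, rfl⟩ | ⟨j, rfl⟩
    · exact .inl ⟨h.1, h.2.1⟩
    · exact .inr (.inl (hchO u j))
    · exact .inr (.inr (hchO v j))

end Absorb

section Partition

variable [Fintype V]

/-- A partition with the fewest monochromatic edges: each vertex has, in its own class, at most as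
many neighbours as in any other class. -/
theorem exists_unfriendly_partition {κ : Type*} [Finite κ] [Nonempty κ] (G : SimpleGraph V) :
    ∃ f : V → κ, ∀ v c, #{w | G.Adj v w ∧ f w = f v} ≤ #{w | G.Adj v w ∧ f w = c} := by
  set g : (V → κ) → V → V → ℕ := fun f u w => if G.Adj u w ∧ f w = f u then 1 else 0 with hg
  have hsymm : ∀ f u w, g f u w = g f w u := fun f u w => by
    simp only [hg, G.adj_comm u w, eq_comm (a := f w)]
  obtain ⟨f, hf⟩ := Finite.exists_min fun f : V → κ => ∑ u, ∑ w, g f u w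
  refine ⟨f, fun v c => ?_⟩
  have key : ∀ f, ∑ u, ∑ w, g f u w = 2 * ∑ w, g f v w +
      ∑ u ∈ univ.erase v, ∑ w ∈ univ.erase v, g f u w := by
    intro f
    have h0 : g f v v = 0 := by simp [hg]
    have h1 : ∑ u ∈ univ.erase v, g f u v = ∑ w, g f v w := by
      rw [← add_sum_erase univ _ (mem_univ v), h0, zero_add]
      exact sum_congr rfl fun u _ => hsymm f u v
    rw [← add_sum_erase univ _ (mem_univ v),
      sum_congr rfl fun u _ => (add_sum_erase univ (g f u) (mem_univ v)).symm,
      sum_add_distrib, h1]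
    ring
  have hR : ∑ u ∈ univ.erase v, ∑ w ∈ univ.erase v, g (Function.update f v c) u w =
      ∑ u ∈ univ.erase v, ∑ w ∈ univ.erase v, g f u w := by
    refine sum_congr rfl fun u hu => sum_congr rfl fun w hw => ?_
    simp only [hg, Function.update_of_ne (ne_of_mem_erase hu),
      Function.update_of_ne (ne_of_mem_erase hw)]
  have hc : ∑ w, g (Function.update f v c) v w = #{w | G.Adj v w ∧ f w = c} := by
    rw [card_filter]
    refine sum_congr rfl fun w _ => ?_
    by_cases h : w = v
    · simp [hg, h]
    · simp [hg, h]
  have := hf (Function.update f v c)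
  rw [key, key, hR, hc] at this
  have h2 : #{w | G.Adj v w ∧ f w = f v} = ∑ w, g f v w := by
    rw [card_filter]
  omega

/-- After removing thirteen locally irregular graphs the vertices are properly colored with
thirteen colors. -/
theorem exists_dec_of_coloring (G : SimpleGraph V) :
    ∃ H ≤ G, Dec (Fin 13) H ∧ ∃ f : V → Fin 13, ∀ u v, (G \ H).Adj u v → f u ≠ f v := by
  obtain ⟨f, hf⟩ := exists_unfriendly_partition (κ := Fin 13) G
  obtain ⟨own, hown, hcard⟩ : ∃ own : Fin 13 → Finset (Fin 13),
      (∀ i j, j ∈ own i → i ∉ own j) ∧ ∀ i, #(own i) = 6 :=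
    ⟨fun i => univ.filter fun j => 1 ≤ j - i ∧ j - i ≤ 6, by decide, by decide⟩
  have hself : ∀ i, i ∉ own i := fun i h => hown i i h h
  choose H hHG hHI hHA hH using fun i => exists_locIrr_of_reservoir G {v | f v = i}
    (fun v => univ.filter fun w => G.Adj v w ∧ f w ∈ own (f v))
    (by
      simp only [Set.mem_ofPred_eq, mem_filter, mem_univ, true_and]
      rintro a rfl p ⟨h1, h2⟩
      exact ⟨h1, fun h => hself _ (h ▸ h2)⟩)
    (by
      simp only [Set.mem_ofPred_eq]
      rintro a rfl
      rw [card_eq_sum_card_fiberwise (f := f) (t := own (f a))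
        (s := univ.filter fun w => G.Adj a w ∧ f w ∈ own (f a))
        (fun w hw => (mem_filter.1 hw).2.2), ← hcard (f a), ← smul_eq_mul]
      refine card_nsmul_le_sum _ _ _ fun c hc =>
        (card_le_card fun w hw => by simpa using hw).trans
          ((hf a c).trans (card_le_card fun w hw => ?_))
      simp only [mem_filter, mem_univ, true_and] at hw ⊢
      exact ⟨⟨hw.1, hw.2 ▸ hc⟩, hw.2⟩)
  simp only [Set.mem_ofPred_eq, mem_filter, mem_univ, true_and] at hHA hH
  refine ⟨⨆ i, H i, iSup_le hHG, Dec.of_family H (fun i j u v hi hj => ?_) hHI, f,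
    fun u v h he => h.2 ?_⟩
  · by_contra hij
    rcases hH i u v hi with ⟨h1, h2⟩ | ⟨h1, -, h2⟩ | ⟨h1, -, h2⟩ <;>
    rcases hH j u v hj with ⟨h3, h4⟩ | ⟨h3, -, h4⟩ | ⟨h3, -, h4⟩ <;>
    subst h1 <;> first | exact hij h3 | exact hij h4 | skip
    · exact hij (h2.symm.trans h3)
    · subst h3
      exact hown _ _ h2 h4
    · subst h3
      exact hown _ _ h2 h4
  · rw [SimpleGraph.iSup_adj]
    exact ⟨f u, hHA _ u rfl v he.symm h.1⟩

end Partition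

section Bipartite

theorem exists_side_even (s : V → Bool) (P : Finset V) (t : V) (ht : t ∈ P) :
    ∃ (del : Prop) (b : Bool), Even #{v ∈ P | s v = b ∧ ¬ (del ∧ v = t)} := by
  by_cases h₁ : ∃ b, Even #{v ∈ P | s v = b}
  · obtain ⟨b, hb⟩ := h₁
    exact ⟨False, b, by simpa using hb⟩
  · simp only [not_exists, Nat.not_even_iff_odd] at h₁
    refine ⟨True, s t, ?_⟩
    have h₃ := card_erase_add_one (show t ∈ {v ∈ P | s v = s t} by simp [ht])
    have h₄ := h₁ (s t)
    rw [← h₃] at h₄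
    convert Nat.not_odd_iff_even.1 (Nat.odd_add_one.1 h₄) using 2
    ext v
    simp only [mem_filter, mem_erase]
    tauto

/-- The degree sum over a union of components is even. -/
theorem sum_degree_eq_zero (Γ : SimpleGraph V) (P : Finset V) (N : V → Finset V)
    (hN : ∀ u ∈ P, ∀ v, v ∈ N u ↔ v ∈ P ∧ Γ.Adj u v) :
    ∑ v ∈ P, (#(N v) : ZMod 2) = 0 := by
  simp only [card_eq_sum_ones, Nat.cast_sum, Nat.cast_one]
  rw [sum_sigma']
  refine sum_involution (fun x _ => ⟨x.2, x.1⟩) ?_ ?_ ?_ ?_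
  · intros
    decide
  · rintro ⟨u, v⟩ h - h'
    rw [mem_sigma] at h
    simp only [Sigma.mk.injEq] at h'
    exact ((hN u h.1 v).1 h.2).2.ne h'.1.symm
  · rintro ⟨u, v⟩ h
    rw [mem_sigma] at h ⊢
    have := (hN u h.1 v).1 h.2
    exact ⟨this.1, (hN v this.1 u).2 ⟨h.1, this.2.symm⟩⟩
  · rintro ⟨u, v⟩ h
    rfl

variable [Fintype V]

theorem Dec.of_coloring {ι : Type} (G : SimpleGraph V) (κ : V → V → Option ι)
    (hκ : ∀ u v, κ u v = κ v u)
    (hl : ∀ (i : ι) (H : SimpleGraph V),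
      (∀ u v, H.Adj u v ↔ G.Adj u v ∧ κ u v = some i) → LocIrr H) :
    ∃ T ≤ G, (∀ u v, T.Adj u v ↔ G.Adj u v ∧ κ u v = none) ∧ Dec ι (G \ T) := by
  have hgr : ∀ o : Option ι, ∃ H : SimpleGraph V, ∀ u v, H.Adj u v ↔ G.Adj u v ∧ κ u v = o :=
    fun o => ⟨⟨_, ⟨fun u v h => ⟨h.1.symm, (hκ v u).trans h.2⟩⟩, ⟨fun u h => h.1.ne rfl⟩⟩,
      fun _ _ => Iff.rfl⟩
  choose H hH using hgr
  refine ⟨H none, fun u v h => ((hH _ u v).1 h).1, hH none, fun i => H (some i), fun u v => ?_,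
    fun i j u v hi hj => ?_, fun i => hl i _ (hH _)⟩
  · simp only [SimpleGraph.sdiff_adj, hH, exists_and_left, not_and]
    cases κ u v <;> simp +contextual
  · exact Option.some_injective _ (((hH _ u v).1 hi).2.symm.trans ((hH _ u v).1 hj).2)

/-- The class of an edge `uv`, given whether it meets a deleted vertex (`z`), whether it meets one
of degree at least two (`z₂`), whether it is a selected parent edge of `u` or of `v` (`j`, `j'`),
whether the parent has at least two selected children (`c`, `c'`), and the side of the parent. -/
noncomputable def edgeClass (z z₂ j c j' c' : Prop) (b b' : Bool) :
    Option (Option (Option Bool)) :=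
  if z then if z₂ then some (some none) else none
  else if j then if c then some (some (some b)) else none
  else if j' then if c' then some (some (some b')) else none
  else some none

section EdgeClass

variable {z z₂ j c j' c' : Prop} {b b' : Bool}

theorem edgeClass_comm (h : j → ¬ j') :
    edgeClass z z₂ j c j' c' b b' = edgeClass z z₂ j' c' j c b' b := by
  simp only [edgeClass]
  split_ifs <;> tauto

theorem edgeClass_eq_some_none :
    edgeClass z z₂ j c j' c' b b' = some none ↔ ¬ z ∧ ¬ j ∧ ¬ j' := by
  simp only [edgeClass]
  split_ifs <;> simp <;> tauto

theorem edgeClass_eq_some_some_none (h : z₂ → z) :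
    edgeClass z z₂ j c j' c' b b' = some (some none) ↔ z₂ := by
  simp only [edgeClass]
  split_ifs <;> simp <;> tauto

theorem edgeClass_eq_some_some_some (h : j → ¬ j') (hz : j → ¬ z) (hz' : j' → ¬ z) (a : Bool) :
    edgeClass z z₂ j c j' c' b b' = some (some (some a)) ↔ j ∧ c ∧ b = a ∨ j' ∧ c' ∧ b' = a := by
  simp only [edgeClass]
  split_ifs <;> simp <;> tauto

theorem edgeClass_eq_none (h : edgeClass z z₂ j c j' c' b b' = none) :
    z ∧ ¬ z₂ ∨ j ∧ ¬ c ∨ j' ∧ ¬ c' := by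
  simp only [edgeClass] at h
  split_ifs at h <;> tauto

theorem indicator_eq_add_add {p g : Prop} [Decidable p] (h₁ : p ↔ g ∨ j ∨ j') (h₂ : g → ¬ j ∧ ¬ j')
    (h₃ : j → ¬ j') : (if p then 1 else 0 : ℕ) =
      (if g then 1 else 0) + ((if j then 1 else 0) + if j' then 1 else 0) := by
  by_cases j <;> by_cases j' <;> by_cases g <;> simp_all

end EdgeClass

/-- A bipartite graph splits into four locally irregular graphs and a graph of maximum degree
at most three. -/
theorem exists_dec_of_bipartite (Γ : SimpleGraph V) (s : V → Bool)
    (hs : ∀ u v, Γ.Adj u v → s u ≠ s v) :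
    ∃ T ≤ Γ, (∀ v, deg T v ≤ 3) ∧ Dec (Option (Option Bool)) (Γ \ T) := by
  obtain ⟨top, htop, hpar⟩ := exists_parity_subforest Γ
  have hmk : ∀ {u v}, Γ.Adj u v → Γ.connectedComponentMk u = Γ.connectedComponentMk v :=
    fun h => SimpleGraph.ConnectedComponent.sound h.reachable
  choose del side hside using fun c => exists_side_even s
    (univ.filter fun v => Γ.connectedComponentMk v = c) (top c) (by simp [htop])
  obtain ⟨Z, hZ⟩ : ∃ Z : Set V, ∀ v, v ∈ Z ↔ del (Γ.connectedComponentMk v) ∧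
      v = top (Γ.connectedComponentMk v) := ⟨{v | _}, fun _ => Iff.rfl⟩
  have hZadj : ∀ {u v}, Γ.Adj u v → u ∈ Z → v ∉ Z := by
    intro u v h hu hv
    rw [hZ, ← hmk h] at hv
    exact h.ne (((hZ u).1 hu).2.trans hv.2.symm)
  obtain ⟨o, ho⟩ : ∃ o : V → Prop, ∀ v, o v ↔ s v = side (Γ.connectedComponentMk v) :=
    ⟨_, fun _ => Iff.rfl⟩
  have hoadj : ∀ {u v}, Γ.Adj u v → (o u ↔ ¬ o v) := by
    intro u v h
    have := hs u v h
    rw [ho, ho, hmk h]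
    cases h1 : s u <;> cases h2 : s v <;> cases side (Γ.connectedComponentMk v) <;> simp_all
  obtain ⟨par, rk, D, hD, hDτ⟩ := hpar Z
    (fun v => #{u | Γ.Adj v u ∧ u ∉ Z} + if o v then 1 else 0) (fun v h => ((hZ v).1 h).2) <| by
    intro c
    rw [sum_add_distrib, sum_degree_eq_zero Γ _ _ fun u hu v => ?_, zero_add, sum_boole,
      ZMod.natCast_eq_zero_iff_even]
    · convert hside c using 2
      ext v
      simp only [mem_filter, mem_univ, true_and, ho, hZ]
      constructor
      · rintro ⟨⟨rfl, h1⟩, h2⟩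
        exact ⟨rfl, h2, h1⟩
      · rintro ⟨rfl, h1, h2⟩
        exact ⟨⟨rfl, h2⟩, h1⟩
    · simp only [mem_filter, mem_univ, true_and] at hu ⊢
      constructor
      · rintro ⟨h1, h2⟩
        exact ⟨⟨(hmk h1).symm.trans hu.1, h2⟩, h1⟩
      · rintro ⟨⟨-, h2⟩, h1⟩
        exact ⟨h1, h2⟩
  obtain ⟨J, hJ⟩ : ∃ J : V → V → Prop, ∀ u v, J u v ↔ u ∈ D ∧ par u = v := ⟨_, fun _ _ => Iff.rfl⟩
  have hJD : ∀ {u v}, J u v → u ∉ Z ∧ v ∉ Z ∧ Γ.Adj u v ∧ rk v < rk u := by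
    intro u v h
    obtain ⟨hu, rfl⟩ := (hJ u v).1 h
    exact hD u hu
  have hJJ : ∀ {u v}, J u v → ¬ J v u := fun h h' =>
    absurd (hJD h).2.2.2 (hJD h').2.2.2.not_gt
  set ch : V → ℕ := fun w => #{u | J u w} with hch
  have hJdeg : ∀ v, v ∉ Z → ((#{u | J v u} + ch v : ℕ) : ZMod 2) =
      #{u | Γ.Adj v u ∧ u ∉ Z} + if o v then 1 else 0 := by
    intro v hv
    rw [← hDτ v hv, Nat.cast_add]
    congr 1
    · by_cases h : v ∈ D
      · have : ({u | J v u} : Finset V) = {par v} := by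
          ext u
          simp [hJ, h, eq_comm]
        rw [this, card_singleton, if_pos h, Nat.cast_one]
      · simp [hJ, h]
    · exact congrArg _ (congrArg card (Finset.ext fun u => by simp [hJ]))
  set z₂ : V → V → Prop := fun u v => u ∈ Z ∧ 2 ≤ deg Γ u ∨ v ∈ Z ∧ 2 ≤ deg Γ v
  have hz₂' : ∀ u v, z₂ u v → u ∈ Z ∨ v ∈ Z := fun u v h => h.imp And.left And.left
  have hz₂c : ∀ u v, z₂ u v ↔ z₂ v u := fun u v => or_comm
  have hJZ : ∀ {u v}, J u v → ¬ (u ∈ Z ∨ v ∈ Z) := fun h => not_or.2 ⟨(hJD h).1, (hJD h).2.1⟩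
  obtain ⟨κ, hκ⟩ : ∃ κ : V → V → Option (Option (Option Bool)), ∀ u v, κ u v =
      edgeClass (u ∈ Z ∨ v ∈ Z) (z₂ u v) (J u v) (2 ≤ ch v) (J v u) (2 ≤ ch u) (s v) (s u) :=
    ⟨_, fun _ _ => rfl⟩
  have hκJ : ∀ u v b, κ u v = some (some (some b)) ↔
      J u v ∧ 2 ≤ ch v ∧ s v = b ∨ J v u ∧ 2 ≤ ch u ∧ s u = b := by
    intro u v b
    rw [hκ, edgeClass_eq_some_some_some hJJ hJZ fun h => or_comm.not.1 (hJZ h)]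
  obtain ⟨T, hTΓ, hT, hdec⟩ := Dec.of_coloring Γ κ
    (fun u v => by rw [hκ, hκ, edgeClass_comm hJJ, or_comm, hz₂c])
    (by
      rintro (_ | _ | b) H hH u v huv
      · simp only [hκ, edgeClass_eq_some_none] at hH
        have hdeg : ∀ v, v ∉ Z → (deg H v : ZMod 2) = if o v then 1 else 0 := by
          intro v hv
          have h1 : #{u | Γ.Adj v u ∧ u ∉ Z} = deg H v + (#{u | J v u} + ch v) := by
            simp only [deg, hch, card_filter, ← sum_add_distrib]
            refine sum_congr rfl fun u _ => ?_
            refine indicator_eq_add_add ?_ ?_ hJJ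
            · rw [hH]
              constructor
              · rintro ⟨h1, h2⟩
                by_cases h3 : J v u
                · exact .inr (.inl h3)
                by_cases h4 : J u v
                · exact .inr (.inr h4)
                exact .inl ⟨h1, not_or.2 ⟨hv, h2⟩, h3, h4⟩
              · rintro (⟨h1, h2, -⟩ | h | h)
                · exact ⟨h1, (not_or.1 h2).2⟩
                · exact ⟨(hJD h).2.2.1, (hJD h).2.1⟩
                · exact ⟨(hJD h).2.2.1.symm, (hJD h).1⟩
            · exact fun h => ((hH v u).1 h).2.2
          have h2 := hJdeg v hv
          rw [h1, Nat.cast_add (deg H v), add_comm (deg H v : ZMod 2), add_assoc, left_eq_add,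
            CharTwo.add_eq_zero] at h2
          exact h2
        obtain ⟨h1, h2, -⟩ := (hH u v).1 huv
        rw [not_or] at h2
        intro h
        have h3 := hdeg u h2.1
        rw [h, hdeg v h2.2] at h3
        have h4 := hoadj h1
        by_cases h5 : o v <;> simp [h4, h5] at h3
      · simp only [hκ, edgeClass_eq_some_some_none (hz₂' _ _)] at hH
        have hlt : ∀ u v, H.Adj u v → u ∈ Z → 2 ≤ deg Γ u → deg H v < deg H u := by
          intro u v h hu hd
          have h1 : deg Γ u ≤ deg H u := card_le_card fun w hw => by
            simp only [mem_filter, mem_univ, true_and] at hw ⊢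
            exact (hH u w).2 ⟨hw, .inl ⟨hu, hd⟩⟩
          have h2 : deg H v ≤ #{u} := deg_le_card fun w hw => by
            have h3 := ((hH u v).1 h).1
            obtain ⟨h4, h5⟩ := (hH v w).1 hw
            have h6 : w ∈ Z := (h5.resolve_left fun h => hZadj h3 hu h.1).1
            rw [mem_singleton, ((hZ w).1 h6).2, ((hZ u).1 hu).2, ← hmk h4, hmk h3]
          rw [card_singleton] at h2
          omega
        rcases ((hH u v).1 huv).2 with ⟨h1, h2⟩ | ⟨h1, h2⟩
        · exact (hlt u v huv h1 h2).ne'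
        · exact (hlt v u huv.symm h1 h2).ne
      · simp only [hκJ] at hH
        have hlt : ∀ u v, J v u → 2 ≤ ch u → s u = b → deg H v < deg H u := by
          intro u v h hc hb
          have h1 : ch u ≤ deg H u := card_le_card fun w hw => by
            simp only [mem_filter, mem_univ, true_and] at hw ⊢
            exact (hH u w).2 ⟨(hJD hw).2.2.1.symm, .inr ⟨hw, hc, hb⟩⟩
          have h2 : deg H v ≤ #{u} := deg_le_card fun w hw => by
            obtain ⟨-, ⟨h3, -⟩ | ⟨-, -, h3⟩⟩ := (hH v w).1 hw
            · rw [mem_singleton, ← ((hJ _ _).1 h).2, ← ((hJ _ _).1 h3).2]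
            · exact (hs v u (hJD h).2.2.1 (h3.trans hb.symm)).elim
          rw [card_singleton] at h2
          omega
        rcases ((hH u v).1 huv).2 with ⟨h1, h2, h3⟩ | ⟨h1, h2, h3⟩
        · exact (hlt v u h1 h2 h3).ne
        · exact (hlt u v h1 h2 h3).ne')
  refine ⟨T, hTΓ, fun v => ?_, hdec⟩
  by_cases hv : v ∈ Z ∧ deg Γ v < 2
  · exact (deg_mono hTΓ v).trans (by omega)
  have h1 : deg T v ≤ #({par v, top (Γ.connectedComponentMk v)} ∪
      if ch v < 2 then ({u | J u v} : Finset V) else ∅) := by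
    refine deg_le_card fun u hu => ?_
    obtain ⟨h1, h2⟩ := (hT v u).1 hu
    rw [mem_union, mem_insert, mem_singleton]
    rw [hκ] at h2
    rcases edgeClass_eq_none h2 with ⟨h | h, h'⟩ | h | h
    · exact (hv ⟨h, not_le.1 fun h2 => h' (.inl ⟨h, h2⟩)⟩).elim
    · rw [hmk h1]
      exact .inl (.inr ((hZ u).1 h).2)
    · exact .inl (.inl ((hJ v u).1 h.1).2.symm)
    · right
      rw [if_pos (not_le.1 h.2)]
      simpa using h.1
  refine h1.trans ((card_union_le _ _).trans ?_)
  have h2 := card_le_two (a := par v) (b := top (Γ.connectedComponentMk v))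
  have h3 : #(if ch v < 2 then ({u | J u v} : Finset V) else ∅) ≤ 1 := by
    split_ifs with h
    · exact Nat.lt_succ_iff.1 h
    · simp
  omega

end Bipartite

section Remainder

variable [Fintype V]

theorem Dec.of_card_le {ι κ : Type} [Fintype ι] [Fintype κ] {G : SimpleGraph V} (h : Dec ι G)
    (hc : Fintype.card ι ≤ Fintype.card κ) : Dec κ G :=
  h.of_embedding (Function.Embedding.nonempty_of_card_le hc).some

theorem Dec.of_forall_not_adj {ι : Type} {G : SimpleGraph V} (h : ∀ u v, ¬ G.Adj u v) :
    Dec ι G :=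
  ⟨fun _ => ⊥, by simp [h], by simp, fun _ _ _ h => h.elim⟩

theorem deg_sup_le (H K : SimpleGraph V) (v : V) : deg (H ⊔ K) v ≤ deg H v + deg K v :=
  (deg_le_card fun u hu => by
    rw [mem_union, mem_filter, mem_filter]
    exact hu.imp (fun h => ⟨mem_univ _, h⟩) fun h => ⟨mem_univ _, h⟩).trans (card_union_le _ _)

/-- A properly `2 ^ n`-colored graph splits into `4 * n` locally irregular graphs and a graph of
maximum degree at most `3 * n`. -/
theorem exists_dec_of_lt_two_pow (n : ℕ) (L : SimpleGraph V) (f : V → ℕ) (hf : ∀ v, f v < 2 ^ n)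
    (hL : ∀ u v, L.Adj u v → f u ≠ f v) :
    ∃ T ≤ L, (∀ v, deg T v ≤ 3 * n) ∧ Dec (Fin (4 * n)) (L \ T) := by
  induction n generalizing L f with
  | zero =>
    have h0 : ∀ v, f v = 0 := fun v => by simpa using hf v
    refine ⟨⊥, bot_le, fun v => by simp [deg], Dec.of_forall_not_adj fun u v h => ?_⟩
    exact hL u v h.1 ((h0 u).trans (h0 v).symm)
  | succ n ih =>
    obtain ⟨B, hB⟩ : ∃ B : SimpleGraph V, ∀ u v, B.Adj u v ↔ L.Adj u v ∧ f u % 2 ≠ f v % 2 :=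
      ⟨⟨_, ⟨fun u v h => ⟨h.1.symm, h.2.symm⟩⟩, ⟨fun u h => h.1.ne rfl⟩⟩, fun _ _ => Iff.rfl⟩
    obtain ⟨T₁, hT₁, hd₁, hD₁⟩ := exists_dec_of_bipartite B (fun v => decide (f v % 2 = 0))
      fun u v h => by
        have := ((hB u v).1 h).2
        rw [Ne, decide_eq_decide]
        omega
    obtain ⟨T₂, hT₂, hd₂, hD₂⟩ := ih (L \ B) (fun v => f v / 2)
      (fun v => by have := hf v; rw [pow_succ] at this; omega) fun u v h => by
        have h1 := hL u v h.1
        have h2 := h.2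
        rw [hB, not_and, not_not] at h2
        have := h2 h.1
        omega
    refine ⟨T₁ ⊔ T₂, sup_le (hT₁.trans fun u v h => ((hB u v).1 h).1) (hT₂.trans sdiff_le),
      fun v => (deg_sup_le _ _ v).trans ?_, ?_⟩
    · have := hd₁ v
      have := hd₂ v
      omega
    · have key : Dec (Option (Option Bool) ⊕ Fin (4 * n)) (L \ (T₁ ⊔ T₂)) := by
        refine Dec.add (H := B \ T₁) (fun u v h => ?_) hD₁ ?_
        · exact ⟨((hB u v).1 h.1).1, fun h' => h'.elim h.2 fun h' => (hT₂ h').2 h.1⟩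
        · convert hD₂ using 1
          ext u v
          have h1 := @hT₁ u v
          simp only [SimpleGraph.sdiff_adj, SimpleGraph.sup_adj]
          tauto
      refine key.of_card_le ?_
      simp only [Fintype.card_sum, Fintype.card_option, Fintype.card_bool, Fintype.card_fin]
      omega

theorem deg_sup_eq_left {A B : SimpleGraph V} {x : V} (h : ∀ y, ¬ B.Adj x y) :
    deg (A ⊔ B) x = deg A x :=
  deg_eq_card fun y => by simp [h]

theorem LocIrr.sup {A B : SimpleGraph V} (hA : LocIrr A) (hB : LocIrr B)
    (h : ∀ x y z, A.Adj x y → ¬ B.Adj x z) : LocIrr (A ⊔ B) := by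
  rintro x y (hxy | hxy)
  · rw [deg_sup_eq_left fun z => h x y z hxy, deg_sup_eq_left fun z => h y x z hxy.symm]
    exact hA x y hxy
  · rw [sup_comm, deg_sup_eq_left fun z h' => h x z y h' hxy,
      deg_sup_eq_left fun z h' => h y z x h' hxy.symm]
    exact hB x y hxy

theorem locIrr_of_path {P : SimpleGraph V} {u v w : V} (huv : u ≠ v) (hvw : w ≠ v) (huw : u ≠ w)
    (hP : ∀ a b, P.Adj a b ↔ a = v ∧ (b = u ∨ b = w) ∨ b = v ∧ (a = u ∨ a = w)) : LocIrr P := by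
  have hv : deg P v = 2 := by
    rw [deg_eq_card (s := {u, w}) fun b => ?_, card_pair huw]
    rw [hP, mem_insert, mem_singleton]
    have := huv.symm
    have := hvw.symm
    tauto
  have h1 : ∀ a, a = u ∨ a = w → deg P a = 1 := by
    intro a ha
    rw [deg_eq_card (s := {v}) fun b => ?_, card_singleton]
    rw [hP, mem_singleton]
    have : a ≠ v := by rintro rfl; exact ha.elim huv.symm hvw.symm
    tauto
  intro a b hab
  rcases (hP a b).1 hab with ⟨rfl, h⟩ | ⟨rfl, h⟩
  · rw [hv, h1 b h]
    decide
  · rw [hv, h1 a h]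
    decide

/-- A graph of maximum degree at most `d` splits into a matching and `3 * d + 1` disjoint unions
of paths with two edges. -/
theorem exists_matching_dec (d : ℕ) (T : SimpleGraph V) (hT : ∀ v, deg T v ≤ d) :
    ∃ N ≤ T, (∀ v, deg N v ≤ 1) ∧ Dec (Fin (3 * d + 1)) (T \ N) := by
  induction hm : ∑ v, deg T v using Nat.strong_induction_on generalizing T with
  | _ m ih =>
  subst hm
  by_cases hle : ∀ v, deg T v ≤ 1
  · exact ⟨T, le_rfl, hle, Dec.of_forall_not_adj fun u v h => h.2 h.1⟩
  simp only [not_forall, not_le] at hle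
  obtain ⟨v, hv⟩ := hle
  obtain ⟨u, hu, w, hw, huw⟩ := one_lt_card.1 hv
  simp only [mem_filter, mem_univ, true_and] at hu hw
  obtain ⟨P, hP⟩ : ∃ P : SimpleGraph V, ∀ a b, P.Adj a b ↔
      a = v ∧ (b = u ∨ b = w) ∨ b = v ∧ (a = u ∨ a = w) := by
    refine ⟨⟨_, ⟨fun a b h => h.symm⟩, ⟨fun a h => ?_⟩⟩, fun _ _ => Iff.rfl⟩
    rcases h with ⟨rfl, rfl | rfl⟩ | ⟨rfl, rfl | rfl⟩
    all_goals first | exact hu.ne rfl | exact hw.ne rfl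
  have hPT : P ≤ T := by
    intro a b h
    rcases (hP a b).1 h with ⟨rfl, rfl | rfl⟩ | ⟨rfl, rfl | rfl⟩
    exacts [hu, hw, hu.symm, hw.symm]
  have hPirr : LocIrr P := locIrr_of_path hu.ne' hw.ne' huw hP
  have hlt : ∑ x, deg (T \ P) x < ∑ x, deg T x := by
    refine sum_lt_sum (fun x _ => deg_mono sdiff_le x) ⟨v, mem_univ _, ?_⟩
    exact deg_lt_deg sdiff_le hu (by simp [hP])
  obtain ⟨N, hN, hN1, H, hH, hH', hH''⟩ :=
    ih _ hlt (T \ P) (fun x => (deg_mono sdiff_le x).trans (hT x)) rfl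
  have hblock : ∀ x, #{i | ∃ y, (H i).Adj x y} ≤ d := by
    intro x
    refine le_trans ?_ (hT x)
    have : Nonempty V := ⟨x⟩
    choose! y hy using fun i (hi : ∃ y, (H i).Adj x y) => hi
    refine card_le_card_of_injOn y (fun i hi => ?_) fun i hi j hj hij => ?_
    · have := hy i (by simpa using hi)
      simpa using ((hH x (y i)).2 ⟨i, this⟩).1.1
    · have h1 := hy i (by simpa using hi)
      have h2 := hy j (by simpa using hj)
      rw [← hij] at h2
      exact hH' i j x _ h1 h2
  obtain ⟨i, hi⟩ : ∃ i, ∀ x, x = u ∨ x = v ∨ x = w → ∀ y, ¬ (H i).Adj x y := by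
    have hcard := card_biUnion_le (s := ({u, v, w} : Finset V))
      (t := fun x => ({i | ∃ y, (H i).Adj x y} : Finset (Fin (3 * d + 1))))
    have h3 := hcard.trans (sum_le_card_nsmul _ _ d fun x _ => hblock x)
    have h4 := card_le_three (a := u) (b := v) (c := w)
    have h5 : #({u, v, w} : Finset V) • d ≤ 3 * d := Nat.mul_le_mul_right d h4
    obtain ⟨i, -, hi⟩ := exists_mem_notMem_of_card_lt_card
      (t := (univ : Finset (Fin (3 * d + 1)))) ((h3.trans h5).trans_lt (by simp))
    refine ⟨i, fun x hx y h => hi ?_⟩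
    simp only [mem_biUnion, mem_filter, mem_univ, true_and, mem_insert, mem_singleton]
    exact ⟨x, hx, y, h⟩
  have hPv : ∀ a b, P.Adj a b → a = u ∨ a = v ∨ a = w := by
    intro a b h
    rw [hP] at h
    tauto
  have hup : ∀ k a b, (Function.update H i (H i ⊔ P) k).Adj a b ↔
      (H k).Adj a b ∨ k = i ∧ P.Adj a b := by
    intro k a b
    by_cases hk : k = i
    · subst hk
      simp
    · simp [hk]
  refine ⟨N, hN.trans sdiff_le, hN1, Function.update H i (H i ⊔ P), fun a b => ?_,
    fun j k a b hj hk => ?_, fun k => ?_⟩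
  · simp only [hup, exists_or, ← hH, exists_and_right, exists_eq, true_and,
      SimpleGraph.sdiff_adj]
    have h1 := @hPT a b
    have h2 := @hN a b
    rw [SimpleGraph.sdiff_adj] at h2
    tauto
  · rw [hup] at hj hk
    have key : ∀ k, (H k).Adj a b → ¬ P.Adj a b := fun k h => ((hH a b).2 ⟨k, h⟩).1.2
    rcases hj with hj | ⟨rfl, hj⟩ <;> rcases hk with hk | ⟨rfl, hk⟩
    · exact hH' j k a b hj hk
    · exact (key _ hj hk).elim
    · exact (key _ hk hj).elim
    · rfl
  · by_cases hk : k = i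
    · subst hk
      rw [Function.update_self]
      exact (hH'' k).sup hPirr fun x y z h h' => hi x (hPv x z h') y h
    · rw [Function.update_of_ne hk]
      exact hH'' k

end Remainder

section Assembly

variable [Fintype V]

/-- Every graph splits into a matching and 66 locally irregular graphs. -/
theorem exists_matching_dec_compl (G : SimpleGraph V) :
    ∃ N ≤ G, (∀ v, deg N v ≤ 1) ∧ Dec (Fin 66) (G \ N) := by
  obtain ⟨H, hHG, hH, f, hf⟩ := exists_dec_of_coloring G
  obtain ⟨T, hTL, hT, hTdec⟩ := exists_dec_of_lt_two_pow 4 (G \ H) (fun v => f v)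
    (fun v => (f v).2.trans (by decide)) fun u v h => Fin.val_injective.ne (hf u v h)
  obtain ⟨N, hNT, hN, hNdec⟩ := exists_matching_dec 12 T hT
  have key : Dec (Fin 13 ⊕ (Fin (4 * 4) ⊕ Fin (3 * 12 + 1))) (G \ N) := by
    refine Dec.add (H := H) (fun u v h => ⟨hHG h, fun h' => (hTL (hNT h')).2 h⟩) hH ?_
    rw [sdiff_right_comm]
    exact Dec.sdiff_trans hTL hNT hTdec hNdec
  exact ⟨N, (hNT.trans hTL).trans sdiff_le, hN, key.of_card_le (by simp)⟩

/-- The matching gets its own color, used also on one end of each of its edges. -/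
theorem hasTLIR_of_matching_dec {k : ℕ} {G N : SimpleGraph V} (hNG : N ≤ G)
    (hN : ∀ v, deg N v ≤ 1) (hdec : Dec (Fin k) (G \ N)) : HasTLIR G (k + 2) := by
  obtain ⟨H, hH, hH', hH''⟩ := hdec
  have huniq : ∀ {u v w}, N.Adj u v → N.Adj u w → v = w := fun {u v w} h h' =>
    card_le_one.1 (hN u) v (by simpa using h) w (by simpa using h')
  have hE : ∀ e : Sym2 V, ∃ c : Fin (k + 2), ∀ u v, e = s(u, v) →
      (N.Adj u v → c = Fin.last (k + 1)) ∧ ∀ i, (H i).Adj u v → c = i.castAdd 2 := by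
    intro e
    induction e using Sym2.ind with
    | _ x y =>
    by_cases hn : N.Adj x y
    · refine ⟨Fin.last _, fun u v huv => ⟨fun _ => rfl, fun i hi => ?_⟩⟩
      have := ((hH u v).2 ⟨i, hi⟩).2
      rcases Sym2.eq_iff.1 huv with ⟨rfl, rfl⟩ | ⟨rfl, rfl⟩
      exacts [(this hn).elim, (this hn.symm).elim]
    · by_cases hi : ∃ i, (H i).Adj x y
      · obtain ⟨i, hi⟩ := hi
        refine ⟨i.castAdd 2, fun u v huv => ?_⟩
        rcases Sym2.eq_iff.1 huv with ⟨rfl, rfl⟩ | ⟨rfl, rfl⟩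
        · exact ⟨fun h => (hn h).elim, fun j hj => by rw [hH' i j _ _ hi hj]⟩
        · exact ⟨fun h => (hn h.symm).elim, fun j hj => by rw [hH' i j _ _ hi hj.symm]⟩
      · refine ⟨0, fun u v huv => ?_⟩
        rcases Sym2.eq_iff.1 huv with ⟨rfl, rfl⟩ | ⟨rfl, rfl⟩
        · exact ⟨fun h => (hn h).elim, fun j hj => (hi ⟨j, hj⟩).elim⟩
        · exact ⟨fun h => (hn h.symm).elim, fun j hj => (hi ⟨j, hj.symm⟩).elim⟩
  choose cE hcE using hE
  have hcN : ∀ {u v}, N.Adj u v → cE s(u, v) = Fin.last (k + 1) := fun h => (hcE _ _ _ rfl).1 h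
  have hcH : ∀ {u v i}, (H i).Adj u v → cE s(u, v) = i.castAdd 2 := fun h =>
    (hcE _ _ _ rfl).2 _ h
  have hsplit : ∀ {u v}, G.Adj u v → N.Adj u v ∨ ∃ i, (H i).Adj u v := by
    intro u v h
    rw [← hH, SimpleGraph.sdiff_adj]
    tauto
  have hne : ∀ i : Fin k, i.castAdd 2 ≠ Fin.last (k + 1) := fun i h => by
    have := congrArg Fin.val h
    simp at this
    omega
  obtain ⟨sel, hsel⟩ : ∃ sel : V → Prop, ∀ u v, N.Adj u v → (sel u ↔ ¬ sel v) := by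
    refine ⟨fun u => ∃ v, N.Adj u v ∧ (Quot.out s(u, v)).1 = u, fun u v h => ?_⟩
    have h1 : ∀ {u v}, N.Adj u v →
        ((∃ w, N.Adj u w ∧ (Quot.out s(u, w)).1 = u) ↔ (Quot.out s(u, v)).1 = u) :=
      fun {u v} h => ⟨fun ⟨w, hw, hw'⟩ => huniq hw h ▸ hw', fun h' => ⟨v, h, h'⟩⟩
    beta_reduce
    rw [h1 h, h1 h.symm, Sym2.eq_swap (a := v)]
    have h2 : s((Quot.out s(u, v)).1, (Quot.out s(u, v)).2) = s(u, v) := Quot.out_eq _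
    have h3 := h.ne
    rcases Sym2.eq_iff.1 h2 with ⟨h4, -⟩ | ⟨h4, -⟩ <;> rw [h4] <;> simp [h3, h3.symm]
  refine ⟨fun v => if sel v then Fin.last (k + 1) else (Fin.last k).castSucc, cE, ?_⟩
  have hdegH : ∀ i v, totalDeg G (fun v => if sel v then Fin.last (k + 1) else
      (Fin.last k).castSucc) cE (i.castAdd 2) v = deg (H i) v := by
    intro i v
    have h1 : (if sel v then Fin.last (k + 1) else (Fin.last k).castSucc) ≠ i.castAdd 2 := by
      split_ifs
      · exact (hne i).symm
      · intro h
        have := congrArg Fin.val h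
        simp at this
        omega
    rw [totalDeg, if_neg h1, add_zero]
    refine (deg_eq_card fun u => ?_).symm
    simp only [mem_filter, mem_univ, true_and]
    constructor
    · exact fun h => ⟨((hH v u).2 ⟨i, h⟩).1, hcH h⟩
    · rintro ⟨h, hc⟩
      rcases hsplit h with h | ⟨j, h⟩
      · exact (hne i (hc.symm.trans (hcN h))).elim
      · rw [hcH h] at hc
        rwa [Fin.castAdd_injective _ _ hc] at h
  have hdegN : ∀ u v, N.Adj u v → totalDeg G (fun v => if sel v then Fin.last (k + 1) else
      (Fin.last k).castSucc) cE (Fin.last (k + 1)) u = 1 + if sel u then 1 else 0 := by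
    intro u v huv
    rw [totalDeg]
    congr 1
    · rw [card_eq_one]
      refine ⟨v, ?_⟩
      ext w
      simp only [mem_filter, mem_univ, true_and, mem_singleton]
      constructor
      · rintro ⟨h, hc⟩
        rcases hsplit h with h | ⟨j, h⟩
        · exact huniq h huv
        · exact (hne j ((hcH h).symm.trans hc)).elim
      · rintro rfl
        exact ⟨hNG huv, hcN huv⟩
    · by_cases h : sel u
      · simp [h]
      · have : (Fin.last k).castSucc ≠ Fin.last (k + 1) := (Fin.castSucc_lt_last _).ne
        simp [h, this]
  intro u v huv
  rcases hsplit huv with h | ⟨i, h⟩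
  · rw [hcN h, hdegN u v h, hdegN v u h.symm]
    have := hsel u v h
    by_cases h' : sel v <;> simp [this, h']
  · rw [hcH h, hdegH, hdegH]
    exact hH'' i u v h

theorem hasTLIR_mono {G : SimpleGraph V} {k l : ℕ} (h : HasTLIR G k) (hkl : k ≤ l) :
    HasTLIR G l := by
  obtain ⟨cV, cE, hc⟩ := h
  have hdeg : ∀ i v, totalDeg G (fun v => (cV v).castLE hkl) (fun e => (cE e).castLE hkl)
      (i.castLE hkl) v = totalDeg G cV cE i v := by
    intro i v
    simp only [totalDeg, Fin.castLE_inj]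
  refine ⟨fun v => (cV v).castLE hkl, fun e => (cE e).castLE hkl, fun u v h => ?_⟩
  rw [hdeg, hdeg]
  exact hc u v h

end Assembly

end TLIR

/-- For every finite simple graph `G`, `tlir(G) ≤ 220`. -/
theorem stmt14 {V : Type*} [Fintype V] (G : SimpleGraph V) : HasTLIR G 220 := by
  obtain ⟨N, hNG, hN, hdec⟩ := TLIR.exists_matching_dec_compl G
  exact TLIR.hasTLIR_mono (TLIR.hasTLIR_of_matching_dec hNG hN hdec) (by decide)
end
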